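/- arXiv:2105.07034 — 2 statements merged into one kernel-verified Lean document; each statement's English description precedes it below -/
import Mathlib

section
/- Let G be a fixed graph of degeneracy d ∈ ℕ and let ω = ω(n) be any function tending to infinity as n → ∞. Then there exists a strategy S for the semi-random graph process such that, with t = t(n) = ⌊n^{(d−1)/d} ω(n)⌋, the probability that H_t contains a subgraph isomorphic to G tends to 1 as n → ∞. -/
open Filter
open scoped ENNReal

namespace SemiRandomGraph

/-- One round of the semi-random graph process: the pair (square vertex, circle vertex),
i.e. the random vertex `u_t` together with the player's reply `v_t`. -/
abbrev Step (n : ℕ) := Fin n × Fin n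

/-- A strategy of the player: given the history of the process so far (most recent round
first) and the current random vertex `u_t`, a probability distribution for the reply `v_t`. -/
def Strategy (n : ℕ) := List (Step n) → Fin n → PMF (Fin n)

/-- The distribution of the history (most recent round first) after `t` rounds of the
semi-random graph process played with strategy `S`. -/
noncomputable def historyPMF {n : ℕ} (hn : 0 < n) (S : Strategy n) :
    ℕ → PMF (List (Step n))
  | 0 => PMF.pure []
  | t + 1 =>
      (historyPMF hn S t).bind fun h =>
        (@PMF.uniformOfFintype (Fin n) _ (Fin.pos_iff_nonempty.mp hn)).bind fun u =>
          (S h u).map fun v => (u, v) :: h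

/-- The multigraph built by the process (recorded by its history `h`) contains a subgraph
isomorphic to the simple graph `G`. -/
def ContainsCopy {V : Type*} {n : ℕ} (G : SimpleGraph V) (h : List (Step n)) : Prop :=
  ∃ φ : V ↪ Fin n, ∀ a b : V, G.Adj a b → ((φ a, φ b) ∈ h ∨ (φ b, φ a) ∈ h)

/-- The probability that after `t` rounds the multigraph `H_t` built with strategy `S`
contains a copy of `G`. -/
noncomputable def probContains {V : Type*} (n : ℕ) (S : Strategy n) (G : SimpleGraph V)
    (t : ℕ) : ℝ≥0∞ :=
  if hn : 0 < n then (historyPMF hn S t).toOuterMeasure {h | ContainsCopy G h} else 0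

/-- `G` is `d`-degenerate: every (induced, hence every) subgraph has a vertex of degree
at most `d`. -/
def Degen {V : Type*} (G : SimpleGraph V) [DecidableRel G.Adj] (d : ℕ) : Prop :=
  ∀ s : Finset V, s.Nonempty → ∃ v ∈ s, (s.filter fun u => G.Adj v u).card ≤ d

/-- `G` has degeneracy exactly `d`. -/
def DegeneracyEq {V : Type*} (G : SimpleGraph V) [DecidableRel G.Adj] (d : ℕ) : Prop :=
  Degen G d ∧ ∀ d' : ℕ, Degen G d' → d ≤ d'

end SemiRandomGraph

/-!
Let the player minimise the expected time until the history reaches a goal. Expected times of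
successive goals add up, and a goal that each round meets with probability at least `1 / q` takes
expected time at most `q`; so everything reduces to counting.

Embed `G` vertex by vertex along a degeneracy order. To embed `v` after its at most `d` already
embedded neighbours `y₁, y₂, …`, keep a pool of unused vertices joined to `y₁, …, y_j`, of size
`(l + 1) ^ (d - j)` with `l` of order `n ^ (1 / d)`. Replying with `y_{j+1}`, the player waits for
`(l + 1) ^ (d - j - 1)` vertices of this pool to come up. At least `l * (l + 1) ^ (d - j - 1)` of
its vertices have not come up before the wait is over, so each neighbour costs at most
`n / l = O(n ^ ((d - 1) / d))` rounds in expectation, and Markov's inequality bounds the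
probability of not being done in time.
-/

namespace SemiRandomGraph

open Finset

section HitTime

variable {n : ℕ} {P Q R : Set (List (Step n))} {b c q : ℝ≥0∞}

/-- A set of histories, regarded as a goal of the player, is persistent if it is never left
once reached. -/
def Persistent (P : Set (List (Step n))) : Prop :=
  ∀ h ∈ P, ∀ s, s :: h ∈ P

open Classical in
/-- The least expected value of `min τ t` that the player can achieve, where `τ` is the number of
further rounds after which the history, now equal to `h`, first lies in `P`. Truncating at `t`
makes this computable by backward induction. -/
noncomputable def hitTime (P : Set (List (Step n))) : ℕ → List (Step n) → ℝ≥0∞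
  | 0, _ => 0
  | t + 1, h => if h ∈ P then 0 else 1 + (∑ u, ⨅ v, hitTime P t ((u, v) :: h)) / n

/-- From every history in `Q` the player can reach `P` in expected time at most `c`, in the sense
that `c` bounds the optimal truncated times for all truncations. -/
def LeadsTo (Q P : Set (List (Step n))) (c : ℝ≥0∞) : Prop :=
  ∀ h ∈ Q, ∀ t, hitTime P t h ≤ c

lemma hitTime_of_mem {h : List (Step n)} (hh : h ∈ P) (t : ℕ) : hitTime P t h = 0 := by
  cases t <;> simp [hitTime, hh]

lemma hitTime_succ_of_notMem {h : List (Step n)} (hh : h ∉ P) (t : ℕ) :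
    hitTime P (t + 1) h = 1 + (∑ u, ⨅ v, hitTime P t ((u, v) :: h)) / n := by
  simp [hitTime, hh]

lemma LeadsTo.hitTime_le_add (hQP : LeadsTo Q P c) (t : ℕ) (h : List (Step n)) :
    hitTime P t h ≤ hitTime Q t h + c := by
  induction t generalizing h with
  | zero => simp [hitTime]
  | succ t ih =>
    by_cases hhP : h ∈ P
    · simp [hitTime_of_mem hhP]
    by_cases hhQ : h ∈ Q
    · exact (hQP h hhQ _).trans le_add_self
    rw [hitTime_succ_of_notMem hhP, hitTime_succ_of_notMem hhQ, add_assoc]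
    gcongr 1 + ?_
    calc (∑ u, ⨅ v, hitTime P t ((u, v) :: h)) / n
        ≤ (∑ u, ((⨅ v, hitTime Q t ((u, v) :: h)) + c)) / n := by
          gcongr with u
          rw [ENNReal.iInf_add]
          exact iInf_mono fun v => ih _
      _ = (∑ u, ⨅ v, hitTime Q t ((u, v) :: h)) / n + n * c / n := by
          simp [sum_add_distrib, ENNReal.add_div]
      _ ≤ (∑ u, ⨅ v, hitTime Q t ((u, v) :: h)) / n + c := by
          gcongr
          exact ENNReal.div_le_of_le_mul' le_rfl

lemma hitTime_inter_le (hR : Persistent R) (t : ℕ) {h : List (Step n)} (hh : h ∈ R) :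
    hitTime (P ∩ R) t h ≤ hitTime P t h := by
  induction t generalizing h with
  | zero => simp [hitTime]
  | succ t ih =>
    by_cases hhP : h ∈ P
    · simp [hitTime_of_mem (show h ∈ P ∩ R from ⟨hhP, hh⟩)]
    rw [hitTime_succ_of_notMem hhP, hitTime_succ_of_notMem fun H => hhP H.1]
    gcongr
    exact ih (hR h hh _)

lemma LeadsTo.of_subset (hQP : Q ⊆ P) : LeadsTo Q P 0 :=
  fun _ hh t => (hitTime_of_mem (hQP hh) t).le

lemma LeadsTo.trans (hRQ : LeadsTo R Q b) (hQP : LeadsTo Q P c) : LeadsTo R P (b + c) :=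
  fun h hh t => (hQP.hitTime_le_add t h).trans (by gcongr; exact hRQ h hh t)

lemma LeadsTo.mono_right (hRQ : LeadsTo R Q c) (hQP : Q ⊆ P) : LeadsTo R P c := by
  simpa using hRQ.trans (.of_subset hQP)

lemma LeadsTo.inter (hQP : LeadsTo Q P c) (hR : Persistent R) : LeadsTo (Q ∩ R) (P ∩ R) c :=
  fun h hh t => (hitTime_inter_le hR t hh.2).trans (hQP h hh.1 t)

lemma LeadsTo.of_hit (hQ : Persistent Q)
    (hit : ∀ h ∈ Q, h ∉ P → ∃ (D : Finset (Fin n)) (v : Fin n),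
      (n : ℝ≥0∞) ≤ #D * q ∧ ∀ u ∈ D, (u, v) :: h ∈ P) :
    LeadsTo Q P q := by
  intro h hh t
  induction t generalizing h with
  | zero => simp [hitTime]
  | succ t ih =>
    by_cases hhP : h ∈ P
    · simp [hitTime_of_mem hhP]
    obtain ⟨D, v, hD, hDP⟩ := hit h hh hhP
    have hsum : ∑ u, ⨅ v, hitTime P t ((u, v) :: h) ≤ #Dᶜ * q := by
      calc ∑ u, ⨅ v, hitTime P t ((u, v) :: h)
          ≤ ∑ u, hitTime P t ((u, v) :: h) := by gcongr; exact iInf_le _ v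
        _ = ∑ u ∈ Dᶜ, hitTime P t ((u, v) :: h) := by
          rw [← sum_add_sum_compl D, sum_eq_zero fun u hu => hitTime_of_mem (hDP u hu) t, zero_add]
        _ ≤ #Dᶜ * q := by
          rw [← nsmul_eq_mul]
          exact sum_le_card_nsmul _ _ _ fun u _ => ih _ (hQ h hh _)
    have hn : (n : ℝ≥0∞) ≠ 0 := Nat.cast_ne_zero.mpr v.pos.ne'
    have hcard : (#D + #Dᶜ : ℝ≥0∞) = n := by exact_mod_cast D.card_add_card_compl.trans (by simp)
    calc hitTime P (t + 1) h
        = (n + ∑ u, ⨅ v, hitTime P t ((u, v) :: h)) / n := by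
          rw [hitTime_succ_of_notMem hhP, ENNReal.add_div,
            ENNReal.div_self hn (ENNReal.natCast_ne_top n)]
      _ ≤ (#D * q + #Dᶜ * q) / n := by gcongr
      _ ≤ q := by
          rw [← add_mul, hcard]
          exact ENNReal.div_le_of_le_mul' le_rfl

end HitTime

section Strategy

/-- The expectation of an `ℝ≥0∞`-valued function under a probability mass function. -/
noncomputable def expect {α : Type*} (p : PMF α) (f : α → ℝ≥0∞) : ℝ≥0∞ :=
  ∑' a, p a * f a

lemma expect_pure {α : Type*} (a : α) (f : α → ℝ≥0∞) : expect (PMF.pure a) f = f a := by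
  rw [expect, tsum_eq_single a fun b hb => by simp [hb]]
  simp

lemma expect_bind {α β : Type*} (p : PMF α) (g : α → PMF β) (f : β → ℝ≥0∞) :
    expect (p.bind g) f = expect p fun a => expect (g a) f := by
  simp only [expect, PMF.bind_apply, ← ENNReal.tsum_mul_right, ← ENNReal.tsum_mul_left, mul_assoc]
  exact ENNReal.tsum_comm

lemma expect_uniformOfFintype {α : Type*} [Fintype α] [Nonempty α] (f : α → ℝ≥0∞) :
    expect (PMF.uniformOfFintype α) f = (∑ a, f a) / Fintype.card α := by
  simp [expect, tsum_fintype, ← mul_sum, ENNReal.div_eq_inv_mul]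

lemma expect_mono {α : Type*} {p : PMF α} {f g : α → ℝ≥0∞} (hfg : ∀ a ∈ p.support, f a ≤ g a) :
    expect p f ≤ expect p g := by
  refine ENNReal.tsum_le_tsum fun a => ?_
  by_cases ha : p a = 0
  · simp [ha]
  · gcongr
    exact hfg a ha

lemma expect_indicator_const {α : Type*} (p : PMF α) (s : Set α) (c : ℝ≥0∞) :
    expect p (s.indicator fun _ => c) = c * p.toOuterMeasure s := by
  rw [PMF.toOuterMeasure_apply, expect, ← ENNReal.tsum_mul_left]
  refine tsum_congr fun a => ?_
  by_cases ha : a ∈ s <;> simp [ha, mul_comm]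

lemma toOuterMeasure_add_compl {α : Type*} (p : PMF α) (s : Set α) :
    p.toOuterMeasure s + p.toOuterMeasure sᶜ = 1 := by
  rw [PMF.toOuterMeasure_apply, PMF.toOuterMeasure_apply, ← ENNReal.tsum_add, ← p.tsum_coe]
  exact tsum_congr fun a => congrFun (s.indicator_self_add_compl p) a

variable {n : ℕ}

lemma length_of_mem_support_historyPMF (hn : 0 < n) (S : Strategy n) {t : ℕ} {h : List (Step n)}
    (hh : h ∈ (historyPMF hn S t).support) : h.length = t := by
  induction t generalizing h with
  | zero => simp_all [historyPMF]
  | succ t ih =>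
    simp only [historyPMF, PMF.mem_support_bind_iff, PMF.mem_support_map_iff] at hh
    obtain ⟨h', hh', u, -, v, -, rfl⟩ := hh
    simp [ih hh']

/-- A reply to `u` that minimises the expected time to reach `P` within `t` further rounds. -/
noncomputable def bestReply (P : Set (List (Step n))) (t : ℕ) (h : List (Step n)) (u : Fin n) :
    Fin n :=
  haveI : Nonempty (Fin n) := ⟨u⟩
  (exists_eq_ciInf_of_finite (f := fun v => hitTime P t ((u, v) :: h))).choose

lemma hitTime_bestReply (P : Set (List (Step n))) (t : ℕ) (h : List (Step n)) (u : Fin n) :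
    hitTime P t ((u, bestReply P t h u) :: h) = ⨅ v, hitTime P t ((u, v) :: h) :=
  haveI : Nonempty (Fin n) := ⟨u⟩
  (exists_eq_ciInf_of_finite (f := fun v => hitTime P t ((u, v) :: h))).choose_spec

/-- The deterministic strategy that minimises the expected time to reach `P`, truncated at `T`.
The number of rounds played so far is read off the length of the history. -/
noncomputable def optimalStrategy (P : Set (List (Step n))) (T : ℕ) : Strategy n :=
  fun h u => PMF.pure (bestReply P (T - (h.length + 1)) h u)

lemma expect_historyPMF_optimalStrategy_succ (hn : 0 < n) (P : Set (List (Step n))) (T t : ℕ)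
    (f : List (Step n) → ℝ≥0∞) :
    expect (historyPMF hn (optimalStrategy P T) (t + 1)) f =
      expect (historyPMF hn (optimalStrategy P T) t) fun h =>
        (∑ u, f ((u, bestReply P (T - (h.length + 1)) h u) :: h)) / n := by
  have := Fin.pos_iff_nonempty.mp hn
  simp [historyPMF, optimalStrategy, expect_bind, expect_pure, expect_uniformOfFintype,
    PMF.pure_map]

open Classical in
/-- The potential behind the Markov bound: the rounds played plus the least expected number of
rounds left until `P` or the horizon `T` is reached, dropping to `0` once `P` is reached. It is a
supermartingale under `optimalStrategy P T`, and equals `T` after `T` rounds that missed `P`. -/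
noncomputable def missTime (P : Set (List (Step n))) (T : ℕ) (h : List (Step n)) : ℝ≥0∞ :=
  if h ∈ P then 0 else h.length + hitTime P (T - h.length) h

lemma missTime_le (P : Set (List (Step n))) (T : ℕ) (h : List (Step n)) :
    missTime P T h ≤ h.length + hitTime P (T - h.length) h := by
  unfold missTime
  split_ifs <;> simp

lemma sum_missTime_bestReply_div_le {P : Set (List (Step n))} (hP : Persistent P) {T : ℕ}
    {h : List (Step n)} (hT : h.length < T) :
    (∑ u, missTime P T ((u, bestReply P (T - (h.length + 1)) h u) :: h)) / n ≤ missTime P T h := by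
  by_cases hh : h ∈ P
  · simp [missTime, hh, hP h hh]
  set r := T - (h.length + 1) with hr
  calc (∑ u, missTime P T ((u, bestReply P r h u) :: h)) / n
      ≤ (∑ u, ((h.length + 1 : ℝ≥0∞) + ⨅ v, hitTime P r ((u, v) :: h))) / n := by
        gcongr with u
        exact (missTime_le P T _).trans_eq (by
          rw [List.length_cons, ← hr, hitTime_bestReply, Nat.cast_succ])
    _ = n * (h.length + 1) / n + (∑ u, ⨅ v, hitTime P r ((u, v) :: h)) / n := by
        rw [sum_add_distrib, sum_const, card_univ, Fintype.card_fin, nsmul_eq_mul, ENNReal.add_div]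
    _ ≤ h.length + 1 + (∑ u, ⨅ v, hitTime P r ((u, v) :: h)) / n := by
        gcongr
        exact ENNReal.div_le_of_le_mul' le_rfl
    _ = missTime P T h := by
        rw [missTime, if_neg hh, show T - h.length = r + 1 by omega, hitTime_succ_of_notMem hh,
          add_assoc]

lemma expect_missTime_le (hn : 0 < n) {P : Set (List (Step n))} (hP : Persistent P) {t T : ℕ}
    (ht : t ≤ T) :
    expect (historyPMF hn (optimalStrategy P T) t) (missTime P T) ≤ hitTime P T [] := by
  induction t with
  | zero => simpa [historyPMF, expect_pure] using missTime_le P T []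
  | succ t ih =>
    rw [expect_historyPMF_optimalStrategy_succ]
    refine (expect_mono fun h hh => sum_missTime_bestReply_div_le hP ?_).trans (ih (by omega))
    have := length_of_mem_support_historyPMF hn _ hh
    omega

lemma mul_toOuterMeasure_compl_le_hitTime (hn : 0 < n) {P : Set (List (Step n))}
    (hP : Persistent P) (T : ℕ) :
    T * (historyPMF hn (optimalStrategy P T) T).toOuterMeasure Pᶜ ≤ hitTime P T [] := by
  rw [← expect_indicator_const]
  refine (expect_mono fun h hh => ?_).trans (expect_missTime_le hn hP le_rfl)
  have hlen := length_of_mem_support_historyPMF hn _ hh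
  by_cases hhP : h ∈ P <;> simp [missTime, hhP, hlen]

end Strategy

section Collecting

variable {n : ℕ}

/-- The vertices of `A` that were joined to all vertices of `W` in rounds in which they were the
random vertex. -/
def joinedTo (A W : Finset (Fin n)) (h : List (Step n)) : Finset (Fin n) :=
  {x ∈ A | ∀ w ∈ W, (x, w) ∈ h}

lemma joinedTo_subset (A W : Finset (Fin n)) (h : List (Step n)) : joinedTo A W h ⊆ A :=
  filter_subset _ _

lemma joinedTo_subset_cons (A W : Finset (Fin n)) (h : List (Step n)) (s : Step n) :
    joinedTo A W h ⊆ joinedTo A W (s :: h) :=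
  monotone_filter_right _ fun _ _ hx w hw => List.mem_cons_of_mem _ (hx w hw)

lemma persistent_le_card_joinedTo (A W : Finset (Fin n)) (k : ℕ) :
    Persistent {h | k ≤ #(joinedTo A W h)} :=
  fun h hh s => le_trans hh (card_le_card (joinedTo_subset_cons A W h s))

lemma persistent_subset_joinedTo (A W B : Finset (Fin n)) :
    Persistent {h | B ⊆ joinedTo A W h} :=
  fun h hh s => Subset.trans hh (joinedTo_subset_cons A W h s)

lemma leadsTo_succ_le_card_joinedTo_singleton {A : Finset (Fin n)} {k : ℕ} {q : ℝ≥0∞}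
    (hq : (n : ℝ≥0∞) ≤ (#A - k : ℕ) * q) (w : Fin n) :
    LeadsTo {h | k ≤ #(joinedTo A {w} h)} {h | k + 1 ≤ #(joinedTo A {w} h)} q := by
  refine .of_hit (persistent_le_card_joinedTo A {w} k) fun h hh hhP => ?_
  have hk : #(joinedTo A {w} h) = k := by
    simp only [Set.mem_ofPred_eq] at hh hhP
    omega
  refine ⟨A \ joinedTo A {w} h, w, ?_, fun u hu => ?_⟩
  · rwa [card_sdiff_of_subset (joinedTo_subset A {w} h), hk]
  · rw [Finset.mem_sdiff] at hu
    have hsub : insert u (joinedTo A {w} h) ⊆ joinedTo A {w} ((u, w) :: h) :=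
      insert_subset (by simp [joinedTo, hu.1]) (joinedTo_subset_cons A {w} h _)
    simpa [card_insert_of_notMem hu.2, hk] using card_le_card hsub

lemma leadsTo_le_card_joinedTo_singleton {A : Finset (Fin n)} {l b : ℕ} {c : ℝ≥0∞}
    (hc : n ≤ l * c) (hb : 0 < b) (hA : (l + 1) * b ≤ #A) (w : Fin n) :
    LeadsTo Set.univ {h | b ≤ #(joinedTo A {w} h)} c := by
  have hb' : (b : ℝ≥0∞) ≠ 0 := by exact_mod_cast hb.ne'
  have hcb : b * (c / b) = c := ENNReal.mul_div_cancel hb' (ENNReal.natCast_ne_top b)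
  suffices ∀ k ≤ b, LeadsTo Set.univ {h | k ≤ #(joinedTo A {w} h)} (k * (c / b)) by
    simpa only [hcb] using this b le_rfl
  intro k hk
  induction k with
  | zero => simpa using LeadsTo.of_subset (Set.subset_univ _)
  | succ k ih =>
    have hrest : l * b ≤ #A - k := by
      rw [add_mul] at hA
      omega
    have hq : (n : ℝ≥0∞) ≤ (#A - k : ℕ) * (c / b) :=
      calc (n : ℝ≥0∞) ≤ (l * b : ℕ) * (c / b) := by rwa [Nat.cast_mul, mul_assoc, hcb]
        _ ≤ (#A - k : ℕ) * (c / b) := by gcongr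
    simpa only [Nat.cast_succ, add_mul, one_mul] using
      (ih (by omega)).trans (leadsTo_succ_le_card_joinedTo_singleton hq w)

lemma leadsTo_le_card_joinedTo_insert {A W : Finset (Fin n)} {l b : ℕ} {c : ℝ≥0∞}
    (hc : n ≤ l * c) (hb : 0 < b) (w : Fin n) :
    LeadsTo {h | (l + 1) * b ≤ #(joinedTo A W h)} {h | b ≤ #(joinedTo A (insert w W) h)} c := by
  intro h hh
  have hstep := (leadsTo_le_card_joinedTo_singleton hc hb hh w).inter
    (persistent_subset_joinedTo A W (joinedTo A W h))
  refine hstep.mono_right ?_ h ⟨trivial, Subset.refl _⟩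
  rintro h' ⟨hb', hsub⟩
  refine le_trans hb' (card_le_card fun x hx => ?_)
  simp only [joinedTo, mem_filter, mem_singleton, forall_eq, mem_insert, forall_eq_or_imp] at hx ⊢
  exact ⟨hx.1.1, hx.2, (mem_filter.1 (hsub (mem_filter.2 hx.1))).2⟩

lemma leadsTo_pow_le_card_joinedTo {A W : Finset (Fin n)} {l d : ℕ} {c : ℝ≥0∞}
    (hc : n ≤ l * c) (hA : (l + 1) ^ d ≤ #A) (hW : #W ≤ d) :
    LeadsTo Set.univ {h | (l + 1) ^ (d - #W) ≤ #(joinedTo A W h)} (#W * c) := by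
  induction W using Finset.induction_on with
  | empty =>
    rw [card_empty, Nat.cast_zero, zero_mul]
    exact .of_subset fun h _ => by simpa [joinedTo] using hA
  | insert w W hw ih =>
    rw [card_insert_of_notMem hw] at hW ⊢
    have hpow : (l + 1) ^ (d - #W) = (l + 1) * (l + 1) ^ (d - (#W + 1)) := by
      rw [← pow_succ', show d - #W = d - (#W + 1) + 1 by omega]
    have hprev := ih (by omega)
    rw [hpow] at hprev
    simpa only [Nat.cast_succ, add_mul, one_mul] using
      hprev.trans (leadsTo_le_card_joinedTo_insert hc (by positivity) w)

end Collecting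

section Embedding

variable {V : Type*} {n : ℕ} {G : SimpleGraph V} {s : Finset V} {φ : V → Fin n}

/-- The histories in whose multigraph `φ` embeds the subgraph of `G` induced by `s`; the values of
`φ` outside `s` are irrelevant. -/
def embeddedBy (G : SimpleGraph V) (s : Finset V) (φ : V → Fin n) : Set (List (Step n)) :=
  {h | Set.InjOn φ s ∧ ∀ a ∈ s, ∀ b ∈ s, G.Adj a b → (φ a, φ b) ∈ h ∨ (φ b, φ a) ∈ h}

lemma persistent_embeddedBy : Persistent (embeddedBy G s φ) :=
  fun _ hh _ => ⟨hh.1, fun a ha b hb hab =>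
    (hh.2 a ha b hb hab).imp (List.mem_cons_of_mem _) (List.mem_cons_of_mem _)⟩

lemma embeddedBy_update [DecidableEq V] {h : List (Step n)} {v : V} {x : Fin n}
    (hh : h ∈ embeddedBy G s φ) (hv : v ∉ s) (hx : x ∉ s.image φ)
    (hxh : ∀ y ∈ s, G.Adj v y → (x, φ y) ∈ h) :
    h ∈ embeddedBy G (insert v s) (Function.update φ v x) := by
  have hφ : ∀ y ∈ s, Function.update φ v x y = φ y := fun y hy =>
    Function.update_of_ne (ne_of_mem_of_not_mem hy hv) x φ
  refine ⟨?_, fun a ha b hb hab => ?_⟩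
  · rw [coe_insert, Set.injOn_insert (by simpa using hv), Set.EqOn.injOn_iff hφ,
      Set.EqOn.image_eq hφ, Function.update_self]
    exact ⟨hh.1, by simpa using hx⟩
  · rcases mem_insert.1 ha with rfl | has <;> rcases mem_insert.1 hb with rfl | hbs
    · exact absurd hab G.irrefl
    · simpa only [Function.update_self, hφ b hbs] using Or.inl (hxh b hbs hab)
    · simpa only [Function.update_self, hφ a has] using Or.inr (hxh a has hab.symm)
    · simpa only [hφ a has, hφ b hbs] using hh.2 a has b hbs hab

lemma leadsTo_embeddedBy_insert [DecidableEq V] [DecidableRel G.Adj] {l d : ℕ} {c : ℝ≥0∞}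
    (hc : n ≤ l * c) (hn : (l + 1) ^ d + #s ≤ n) {v : V} (hv : v ∉ s)
    (hd : #{u ∈ s | G.Adj v u} ≤ d) :
    LeadsTo (⋃ φ : V → Fin n, embeddedBy G s φ) (⋃ φ, embeddedBy G (insert v s) φ) (d * c) := by
  intro h hh
  obtain ⟨φ, hφ⟩ := Set.mem_iUnion.1 hh
  set A := (s.image φ)ᶜ with hA
  set W := {u ∈ s | G.Adj v u}.image φ
  have hAcard : (l + 1) ^ d ≤ #A := by
    have : #(s.image φ) ≤ #s := card_image_le
    rw [hA, card_compl, Fintype.card_fin]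
    omega
  have hWcard : #W ≤ d := card_image_le.trans hd
  have hcollect := (leadsTo_pow_le_card_joinedTo hc hAcard hWcard).inter
    (persistent_embeddedBy (G := G) (s := s) (φ := φ))
  refine fun t => (hcollect.mono_right ?_ h ⟨trivial, hφ⟩ t).trans (by gcongr)
  rintro h' ⟨hpow, hφ'⟩
  obtain ⟨x, hx⟩ := card_pos.1 ((Nat.pow_pos l.succ_pos).trans_le hpow)
  obtain ⟨hxA, hxW⟩ := mem_filter.1 hx
  exact Set.mem_iUnion_of_mem _ <| embeddedBy_update hφ' hv (mem_compl.1 hxA) fun y hy hvy =>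
    hxW _ (mem_image_of_mem φ (mem_filter.2 ⟨hy, hvy⟩))

lemma Degen.leadsTo_embeddedBy [DecidableRel G.Adj] {l d k : ℕ} {c : ℝ≥0∞} (hG : Degen G d)
    (hc : n ≤ l * c) (hn : (l + 1) ^ d + k ≤ n) (hs : #s ≤ k) :
    LeadsTo Set.univ (⋃ φ : V → Fin n, embeddedBy G s φ) (#s * (d * c)) := by
  classical
  induction s using Finset.strongInduction with
  | H s ih =>
  rcases s.eq_empty_or_nonempty with rfl | hne
  · have x : Fin n := ⟨0, (Nat.pow_pos l.succ_pos).trans_le (le_of_add_le_left hn)⟩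
    simpa using LeadsTo.of_subset fun h _ =>
      Set.mem_iUnion_of_mem (fun _ => x) (show h ∈ embeddedBy G ∅ _ by simp [embeddedBy])
  obtain ⟨v, hv, hd⟩ := hG s hne
  have hcard : #(s.erase v) + 1 = #s := card_erase_add_one hv
  have hext := leadsTo_embeddedBy_insert hc (by omega : (l + 1) ^ d + #(s.erase v) ≤ n)
    (notMem_erase v s) ((card_le_card (filter_subset_filter _ (erase_subset v s))).trans hd)
  rw [insert_erase hv] at hext
  simpa only [← hcard, Nat.cast_succ, add_mul, one_mul] using
    (ih _ (erase_ssubset hv) (by omega)).trans hext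

lemma Degen.leadsTo_containsCopy [Fintype V] [DecidableRel G.Adj] {l d : ℕ} {c : ℝ≥0∞}
    (hG : Degen G d) (hc : n ≤ l * c) (hn : (l + 1) ^ d + Fintype.card V ≤ n) :
    LeadsTo Set.univ {h : List (Step n) | ContainsCopy G h} (Fintype.card V * (d * c)) := by
  refine (hG.leadsTo_embeddedBy hc hn (s := univ) le_rfl).mono_right (Set.iUnion_subset ?_)
  rintro φ h ⟨hinj, hadj⟩
  exact ⟨⟨φ, by simpa using hinj⟩, fun a b => hadj a (mem_univ a) b (mem_univ b)⟩

end Embedding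

section Asymptotics

lemma exists_le_mul_rpow_and_pow_add_le {d n : ℕ} (hd : 0 < d) (k : ℕ) (hn : 2 * k + 1 ≤ n)
    (hx : 8 ≤ (n : ℝ) ^ (1 / d : ℝ)) :
    ∃ l : ℕ, (n : ℝ) ≤ l * (8 * (n : ℝ) ^ ((d - 1 : ℝ) / d)) ∧ (l + 1) ^ d + k ≤ n := by
  set x := (n : ℝ) ^ (1 / d : ℝ) with hx_def
  have hd' : (d : ℝ) ≠ 0 := by positivity
  have hn' : (0 : ℝ) < n := by exact_mod_cast (by omega : 0 < n)
  have hxd : x ^ d = n := by rw [hx_def, one_div, Real.rpow_inv_natCast_pow hn'.le hd.ne']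
  have hxy : x * (n : ℝ) ^ ((d - 1 : ℝ) / d) = n := by
    rw [hx_def, ← Real.rpow_add hn', show (1 / d + (d - 1) / d : ℝ) = 1 by field_simp; ring,
      Real.rpow_one]
  have hl := Nat.lt_floor_add_one (x / 4)
  have hl' : ⌊x / 4⌋₊ ≤ x / 4 := Nat.floor_le (by positivity)
  refine ⟨⌊x / 4⌋₊, ?_, ?_⟩
  · calc (n : ℝ) = x * (n : ℝ) ^ ((d - 1 : ℝ) / d) := hxy.symm
      _ ≤ (⌊x / 4⌋₊ * 8) * (n : ℝ) ^ ((d - 1 : ℝ) / d) := by gcongr; linarith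
      _ = ⌊x / 4⌋₊ * (8 * (n : ℝ) ^ ((d - 1 : ℝ) / d)) := mul_assoc _ _ _
  · have hpow : ((⌊x / 4⌋₊ : ℝ) + 1) ^ d ≤ n / 2 :=
      calc ((⌊x / 4⌋₊ : ℝ) + 1) ^ d ≤ (x / 2) ^ d := by gcongr; linarith
        _ = n / 2 ^ d := by rw [div_pow, hxd]
        _ ≤ n / 2 := by gcongr; exact le_self_pow₀ one_le_two hd.ne'
    have hk : (2 * k + 1 : ℝ) ≤ n := by exact_mod_cast hn
    have : (((⌊x / 4⌋₊ + 1) ^ d + k : ℕ) : ℝ) ≤ n := by push_cast; linarith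
    exact_mod_cast this

lemma eventually_exists_le_mul_rpow_and_pow_add_le (d k : ℕ) :
    ∀ᶠ n : ℕ in atTop,
      ∃ l : ℕ, (n : ℝ) ≤ l * (8 * (n : ℝ) ^ ((d - 1 : ℝ) / d)) ∧ (l + 1) ^ d + k ≤ n := by
  rcases Nat.eq_zero_or_pos d with rfl | hd
  · filter_upwards [eventually_ge_atTop (k + 1)] with n hn
    refine ⟨n, ?_, by simpa [add_comm] using hn⟩
    -- Division by `d = 0` makes the exponent `0`.
    rw [Nat.cast_zero, div_zero, Real.rpow_zero]
    linarith [n.cast_nonneg (α := ℝ)]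
  · have hroot : Tendsto (fun n : ℕ => (n : ℝ) ^ (1 / d : ℝ)) atTop atTop :=
      (tendsto_rpow_atTop (by positivity)).comp tendsto_natCast_atTop_atTop
    filter_upwards [eventually_ge_atTop (2 * k + 1), hroot.eventually_ge_atTop 8] with n hn hx
    exact exists_le_mul_rpow_and_pow_add_le hd k hn hx

lemma tendsto_div_floor_mul_atTop {ι : Type*} {f : Filter ι} {y ω : ι → ℝ}
    (hy : ∀ᶠ i in f, 1 ≤ y i) (hω : Tendsto ω f atTop) :
    Tendsto (fun i => y i / ⌊y i * ω i⌋₊) f (nhds 0) := by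
  have hlim : Tendsto (fun i => (ω i - 1)⁻¹) f (nhds 0) :=
    (tendsto_atTop_add_const_right f (-1) hω).inv_tendsto_atTop
  refine squeeze_zero' (hy.mono fun i hi => by positivity) ?_ hlim
  filter_upwards [hy, hω.eventually_gt_atTop 1] with i hyi hωi
  have hfloor : y i * (ω i - 1) ≤ ⌊y i * ω i⌋₊ := by
    linarith [Nat.lt_floor_add_one (y i * ω i)]
  have hpos : 0 < y i * (ω i - 1) := mul_pos (by linarith) (by linarith)
  rw [inv_eq_one_div, div_le_div_iff₀ (hpos.trans_le hfloor) (by linarith), one_mul]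
  exact hfloor

lemma eventually_one_le_rpow (d : ℕ) :
    ∀ᶠ n : ℕ in atTop, 1 ≤ (n : ℝ) ^ ((d - 1 : ℝ) / d) := by
  filter_upwards [eventually_ge_atTop 1] with n hn
  refine Real.one_le_rpow (by exact_mod_cast hn) ?_
  rcases Nat.eq_zero_or_pos d with rfl | hd
  · simp
  · have : (1 : ℝ) ≤ d := by exact_mod_cast hd
    exact div_nonneg (by linarith) (by linarith)

end Asymptotics

section Probability

variable {V : Type*} {G : SimpleGraph V}

lemma persistent_containsCopy (G : SimpleGraph V) :
    Persistent {h : List (Step n) | ContainsCopy G h} :=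
  fun _ ⟨φ, hφ⟩ _ => ⟨φ, fun a b hab =>
    (hφ a b hab).imp (List.mem_cons_of_mem _) (List.mem_cons_of_mem _)⟩

lemma probContains_le_one (n : ℕ) (S : Strategy n) (G : SimpleGraph V) (T : ℕ) :
    probContains n S G T ≤ 1 := by
  unfold probContains
  split_ifs with hn
  · exact (toOuterMeasure_add_compl _ _).le.trans' le_self_add
  · exact zero_le_one

lemma one_sub_hitTime_div_le_probContains {n T : ℕ} (hn : 0 < n) (hT : 0 < T) :
    1 - hitTime {h : List (Step n) | ContainsCopy G h} T [] / T ≤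
      probContains n (optimalStrategy {h | ContainsCopy G h} T) G T := by
  have hmiss := mul_toOuterMeasure_compl_le_hitTime hn (persistent_containsCopy G) T
  have hT' : (T : ℝ≥0∞) ≠ 0 := by exact_mod_cast hT.ne'
  rw [mul_comm, ← ENNReal.le_div_iff_mul_le (.inl hT') (.inl (ENNReal.natCast_ne_top T))] at hmiss
  rw [probContains, dif_pos hn, tsub_le_iff_right,
    ← toOuterMeasure_add_compl _ {h | ContainsCopy G h}]
  gcongr

lemma Degen.eventually_leadsTo_containsCopy [Finite V] [DecidableRel G.Adj] {d : ℕ}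
    (hG : Degen G d) :
    ∃ C : ℝ≥0∞, C ≠ ⊤ ∧ ∀ᶠ n : ℕ in atTop,
      LeadsTo Set.univ {h : List (Step n) | ContainsCopy G h}
        (C * ENNReal.ofReal ((n : ℝ) ^ ((d - 1 : ℝ) / d))) := by
  cases nonempty_fintype V
  refine ⟨Fintype.card V * (d * ENNReal.ofReal 8), by finiteness, ?_⟩
  filter_upwards [eventually_exists_le_mul_rpow_and_pow_add_le d (Fintype.card V)]
    with n ⟨l, hl, hln⟩
  rw [mul_assoc, mul_assoc, ← ENNReal.ofReal_mul (by norm_num)]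
  refine hG.leadsTo_containsCopy ?_ hln
  rw [← ENNReal.ofReal_natCast n, ← ENNReal.ofReal_natCast l, ← ENNReal.ofReal_mul l.cast_nonneg]
  exact ENNReal.ofReal_le_ofReal hl

end Probability

end SemiRandomGraph

open SemiRandomGraph in
theorem semiRandom_graph_upper_bound_general
    {V : Type*} [Finite V] (G : SimpleGraph V) [DecidableRel G.Adj]
    (d : ℕ) (hG : Degen G d) (ω : ℕ → ℝ) (hω : Tendsto ω atTop atTop) :
    ∃ S : (n : ℕ) → Strategy n,
      Tendsto
        (fun n : ℕ => probContains n (S n) G (⌊(n : ℝ) ^ (((d : ℝ) - 1) / d) * ω n⌋₊))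
        atTop (nhds 1) := by
  set y : ℕ → ℝ := fun n => (n : ℝ) ^ (((d : ℝ) - 1) / d)
  set T : ℕ → ℕ := fun n => ⌊y n * ω n⌋₊
  refine ⟨fun n => optimalStrategy {h | ContainsCopy G h} (T n), ?_⟩
  obtain ⟨C, hC, htime⟩ := hG.eventually_leadsTo_containsCopy
  have hy : ∀ᶠ n in atTop, 1 ≤ y n := eventually_one_le_rpow d
  have hlim : Tendsto (fun n => 1 - C * ENNReal.ofReal (y n / T n)) atTop (nhds 1) := by
    have hmiss := ENNReal.Tendsto.const_mul
      (ENNReal.tendsto_ofReal (tendsto_div_floor_mul_atTop hy hω)) (.inr hC)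
    simpa using ENNReal.Tendsto.sub tendsto_const_nhds hmiss (.inl ENNReal.one_ne_top)
  refine tendsto_of_tendsto_of_tendsto_of_le_of_le' hlim tendsto_const_nhds ?_
    (.of_forall fun n => probContains_le_one n _ G _)
  filter_upwards [htime, hy, hω.eventually_ge_atTop 1, eventually_gt_atTop 0] with n hn hyn hωn hn0
  have hT : 0 < T n := Nat.floor_pos.2 (one_le_mul_of_one_le_of_one_le hyn hωn)
  refine le_trans ?_ (one_sub_hitTime_div_le_probContains hn0 hT)
  rw [ENNReal.ofReal_div_of_pos (by exact_mod_cast hT), ENNReal.ofReal_natCast, ← mul_div_assoc]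
  gcongr
  exact hn [] trivial (T n)

open SemiRandomGraph in
/-- **Theorem (Ben-Eliezer, Hefetz, Kronenberg, Parczyk, Shikhelman, Stojaković).**
For a fixed graph `G` of degeneracy `d` and any function `ω → ∞`, there is a strategy
for the semi-random graph process that a.a.s. creates a copy of `G` within
`t = ⌊n^{(d-1)/d} ω(n)⌋` rounds. -/
theorem semiRandom_graph_upper_bound
    {V : Type*} [Fintype V] [DecidableEq V] (G : SimpleGraph V) [DecidableRel G.Adj]
    (d : ℕ) (hG : DegeneracyEq G d)
    (ω : ℕ → ℝ) (hω : Tendsto ω atTop atTop) :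
    ∃ S : (n : ℕ) → Strategy n,
      Tendsto
        (fun n : ℕ => probContains n (S n) G (⌊(n : ℝ) ^ (((d : ℝ) - 1) / d) * ω n⌋₊))
        atTop (nhds 1) :=
  semiRandom_graph_upper_bound_general G d hG.1 ω hω
end

section
/- Let r = 1, s ≥ 2, and let G be a fixed s-uniform hypergraph of degeneracy d ∈ ℕ. Then τ^{(1)}_{P_G} = (d−1)/d. -/
open Filter
open scoped ENNReal

namespace SemiRandomHypergraph

/-- The collection of `k`-element subsets of `Fin n`. -/
abbrev Col (n k : ℕ) := {A : Finset (Fin n) // A.card = k}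

lemma col_nonempty {n k : ℕ} (h : k ≤ n) : Nonempty (Col n k) := by
  obtain ⟨t, -, ht⟩ :=
    Finset.exists_subset_card_eq (show k ≤ (Finset.univ : Finset (Fin n)).card by simpa using h)
  exact ⟨⟨t, ht⟩⟩

/-- One round of the semi-random `(r,s)`-hypergraph process: the random `r`-set `U_t`
together with the player's reply, an `(s-r)`-set `V_t` (which may overlap `U_t`). -/
abbrev Step (n r s : ℕ) := Col n r × Col n (s - r)

/-- A strategy of the player: given the history so far (most recent round first) and the
current random `r`-set `U_t`, a probability distribution for the reply `V_t`. -/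
def Strategy (n r s : ℕ) := List (Step n r s) → Col n r → PMF (Col n (s - r))

/-- The distribution of the history (most recent round first) after `t` rounds of the
semi-random hypergraph process played with strategy `S`. -/
noncomputable def historyPMF {n r s : ℕ} (h : Nonempty (Col n r)) (S : Strategy n r s) :
    ℕ → PMF (List (Step n r s))
  | 0 => PMF.pure []
  | t + 1 =>
      (historyPMF h S t).bind fun hist =>
        (@PMF.uniformOfFintype (Col n r) _ h).bind fun U =>
          (S hist U).map fun W => (U, W) :: hist

/-- The multi-hypergraph `H_t^{(r,s)}` (recorded by its history `hist`; the edge created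
in a round is the multiset `U_t + V_t`) contains a sub-hypergraph isomorphic to the
hypergraph with edge set `E`. -/
def ContainsCopy {V : Type*} {n r s : ℕ} (E : Finset (Finset V))
    (hist : List (Step n r s)) : Prop :=
  ∃ φ : V ↪ Fin n, ∀ e ∈ E, ∃ p ∈ hist,
    Multiset.map (φ : V → Fin n) e.val = p.1.1.val + p.2.1.val

/-- The probability that after `t` rounds the multi-hypergraph `H_t^{(r,s)}` built with
strategy `S` contains a copy of the hypergraph with edge set `E`. -/
noncomputable def probContains {V : Type*} (n r s : ℕ) (E : Finset (Finset V))
    (S : Strategy n r s) (t : ℕ) : ℝ≥0∞ :=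
  if h : r ≤ n then
    (historyPMF (col_nonempty h) S t).toOuterMeasure {hist | ContainsCopy E hist}
  else 0

/-- `τ^{(r)}_{P_G}(q, n)`: the least number of rounds needed so that some strategy makes
the probability of containing a copy of `G` at least `q` (`⊤` if impossible). -/
noncomputable def tauQ {V : Type*} (r s : ℕ) (E : Finset (Finset V)) (q : ℝ≥0∞)
    (n : ℕ) : ℕ∞ :=
  ⨅ S : Strategy n r s,
    sInf {c : ℕ∞ | ∃ t : ℕ, c = (t : ℕ∞) ∧ q ≤ probContains n r s E S t}

/-- Logarithm on `ℕ∞`, with `log ⊤ = ⊤`, valued in `EReal`. -/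
noncomputable def elog (m : ℕ∞) : EReal :=
  WithTop.recTopCoe ⊤ (fun t : ℕ => ((Real.log t : ℝ) : EReal)) m

/-- `τ^{(r)}_{P_G} = lim_{q→1⁻} limsup_{n→∞} ln(τ^{(r)}_{P_G}(q,n)) / ln n`; since
`q ↦ limsup_n …` is non-decreasing, the limit as `q → 1⁻` equals the supremum over
`q ∈ (0,1)`. -/
noncomputable def tauExp {V : Type*} (r s : ℕ) (E : Finset (Finset V)) : EReal :=
  ⨆ q ∈ Set.Ioo (0 : ℝ≥0∞) 1,
    Filter.limsup
      (fun n : ℕ => elog (tauQ r s E q n) * (((Real.log n)⁻¹ : ℝ) : EReal)) atTop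

/-- The hypergraph with edge set `E` is `d`-degenerate: every (induced, hence every)
sub-hypergraph has a vertex of degree at most `d`. -/
def Degen {V : Type*} [DecidableEq V] (E : Finset (Finset V)) (d : ℕ) : Prop :=
  ∀ S : Finset V, S.Nonempty → ∃ v ∈ S, (E.filter fun e => v ∈ e ∧ e ⊆ S).card ≤ d

/-- The hypergraph with edge set `E` has degeneracy exactly `d`. -/
def DegeneracyEq {V : Type*} [DecidableEq V] (E : Finset (Finset V)) (d : ℕ) : Prop :=
  Degen E d ∧ ∀ d' : ℕ, Degen E d' → d ≤ d'

end SemiRandomHypergraph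

/-!
*Upper bound.* Embed the vertices of `G` one at a time, in the reverse of a degeneracy ordering, so
that a new vertex closes at most `d` edges. These are realised one edge per stage of about
`n ^ ((d - 1) / d + ε)` rounds: whenever a random vertex is drawn, the player completes it to a copy
of the current edge. If `C` is the set of vertices that are still candidates after the current
stage, then `exp (-#C)` contracts on average, and `n ^ (1 - j / d)` candidates survive `j` stages;
as at most `d` stages are needed, a candidate is left at the end.

*Lower bound.* Let every vertex of the sub-hypergraph on `S` have degree at least `d`. A copy of it
can be charged either to a vertex drawn `d` times, or, if there is none, to a chain of `d` draws:
direct each edge from its drawn vertex to the player's reply. Going back in time from the last edge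
of the copy, each draw of the chain hits a dangerous vertex, that is, one whose ancestors in this
digraph meet only few edges that are still missing. As out-degrees are bounded, a draw of a
dangerous vertex creates at most a constant number `M` of dangerous vertices with one missing edge
less, so within `t` rounds each level has expected size at most `M t / n` times that of the previous
one. In both cases the expected number is at most `n (M t / n) ^ d`, which is small unless `t` is of
order at least `n ^ ((d - 1) / d)`.
-/

namespace SemiRandomHypergraph

open scoped Topology

section Expectation

variable {α β : Type*}

/-- The expectation of `f` under the discrete distribution `p`. -/
noncomputable def expect (p : PMF α) (f : α → ℝ≥0∞) : ℝ≥0∞ := ∑' a, p a * f a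

lemma expect_pure (a : α) (f : α → ℝ≥0∞) : expect (PMF.pure a) f = f a := by
  classical
  rw [expect, tsum_eq_single a fun b hb => by simp [PMF.pure_apply, hb]]
  simp

lemma expect_bind (p : PMF α) (k : α → PMF β) (f : β → ℝ≥0∞) :
    expect (p.bind k) f = expect p fun a => expect (k a) f := by
  simp_rw [expect, PMF.bind_apply, ← ENNReal.tsum_mul_right, ← ENNReal.tsum_mul_left]
  rw [ENNReal.tsum_comm]
  simp_rw [mul_assoc]

lemma expect_map (p : PMF α) (g : α → β) (f : β → ℝ≥0∞) :
    expect (p.map g) f = expect p fun a => f (g a) := by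
  simp only [PMF.map, expect_bind, Function.comp_apply, expect_pure]

lemma expect_uniformOfFintype [Fintype α] [Nonempty α] (f : α → ℝ≥0∞) :
    expect (PMF.uniformOfFintype α) f = (Fintype.card α : ℝ≥0∞)⁻¹ * ∑ a, f a := by
  simp only [expect, PMF.uniformOfFintype_apply, tsum_fintype, Finset.mul_sum]

lemma expect_mono (p : PMF α) {f g : α → ℝ≥0∞} (h : ∀ a, f a ≤ g a) :
    expect p f ≤ expect p g :=
  ENNReal.tsum_le_tsum fun a => mul_le_mul_right (h a) _

lemma expect_congr (p : PMF α) {f g : α → ℝ≥0∞} (h : ∀ a ∈ p.support, f a = g a) :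
    expect p f = expect p g := by
  refine tsum_congr fun a => ?_
  by_cases ha : p a = 0
  · simp [ha]
  · rw [h a ((p.mem_support_iff a).2 ha)]

lemma expect_add (p : PMF α) (f g : α → ℝ≥0∞) :
    expect p (fun a => f a + g a) = expect p f + expect p g := by
  simp only [expect, mul_add, ENNReal.tsum_add]

lemma expect_const_mul (p : PMF α) (c : ℝ≥0∞) (f : α → ℝ≥0∞) :
    expect p (fun a => c * f a) = c * expect p f := by
  simp only [expect, ← ENNReal.tsum_mul_left, mul_left_comm]

lemma expect_const (p : PMF α) (c : ℝ≥0∞) : expect p (fun _ => c) = c := by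
  rw [expect, ENNReal.tsum_mul_right, p.tsum_coe, one_mul]

lemma expect_le_of_forall_le (p : PMF α) {f : α → ℝ≥0∞} {c : ℝ≥0∞} (h : ∀ a, f a ≤ c) :
    expect p f ≤ c :=
  (expect_mono p h).trans_eq (expect_const p c)

lemma toOuterMeasure_eq_expect (p : PMF α) (Q : Set α) :
    p.toOuterMeasure Q = expect p (Q.indicator 1) := by
  rw [PMF.toOuterMeasure_apply, expect]
  refine tsum_congr fun a => ?_
  by_cases ha : a ∈ Q <;> simp [ha]

lemma toOuterMeasure_add_expect_indicator_compl (p : PMF α) (Q : Set α) :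
    p.toOuterMeasure Q + expect p (Qᶜ.indicator 1) = 1 := by
  rw [toOuterMeasure_eq_expect, ← expect_add]
  simp only [Set.indicator_self_add_compl_apply, Pi.one_apply, expect_const]

end Expectation

section Rounds

variable {n r s : ℕ}

lemma length_eq_of_mem_support (h0 : Nonempty (Col n r)) (S : Strategy n r s) (t : ℕ) :
    ∀ h ∈ (historyPMF h0 S t).support, h.length = t := by
  induction t with
  | zero => simp [historyPMF]
  | succ t ih =>
    intro h hh
    simp only [historyPMF, PMF.mem_support_bind_iff, PMF.mem_support_map_iff] at hh
    obtain ⟨h', hh', U, -, W, -, rfl⟩ := hh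
    rw [List.length_cons, ih h' hh']

lemma expect_historyPMF_succ (h0 : Nonempty (Col n r)) (S : Strategy n r s) (t : ℕ)
    (f : List (Step n r s) → ℝ≥0∞) :
    expect (historyPMF h0 S (t + 1)) f =
      expect (historyPMF h0 S t) fun h => expect (PMF.uniformOfFintype (Col n r)) fun U =>
        expect (S h U) fun W => f ((U, W) :: h) := by
  simp only [historyPMF, expect_bind, expect_map]

/-- A vertex, viewed as the one-element set drawn in a round with `r = 1`. -/
def single (u : Fin n) : Col n 1 := ⟨{u}, Finset.card_singleton u⟩

lemma single_bijective : Function.Bijective (single : Fin n → Col n 1) := by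
  refine ⟨fun a b hab => Finset.singleton_injective (congrArg Subtype.val hab), ?_⟩
  rintro ⟨A, hA⟩
  obtain ⟨a, rfl⟩ := Finset.card_eq_one.1 hA
  exact ⟨a, rfl⟩

lemma expect_uniformOfFintype_single [Nonempty (Col n 1)] (f : Col n 1 → ℝ≥0∞) :
    expect (PMF.uniformOfFintype (Col n 1)) f = (n : ℝ≥0∞)⁻¹ * ∑ u, f (single u) := by
  rw [expect_uniformOfFintype, ← Fintype.card_of_bijective single_bijective, Fintype.card_fin,
    single_bijective.sum_comp]

end Rounds

/-! ### Optimal play -/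

section FailValue

variable {n r s : ℕ} [Nonempty (Col n r)]

/-- The value of the game in which the player wants the history to lie in `Q` after exactly `T`
further rounds: the probability, under optimal play, that it does not. -/
noncomputable def failValue (Q : Set (List (Step n r s))) : ℕ → List (Step n r s) → ℝ≥0∞
  | 0, h => Qᶜ.indicator 1 h
  | T + 1, h => expect (PMF.uniformOfFintype (Col n r)) fun U =>
      ⨅ W, failValue Q T ((U, W) :: h)

lemma failValue_zero_of_mem {Q : Set (List (Step n r s))} {h : List (Step n r s)} (hh : h ∈ Q) :
    failValue Q 0 h = 0 :=
  Set.indicator_of_notMem (Set.notMem_compl_iff.2 hh) _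

lemma failValue_zero_of_notMem {Q : Set (List (Step n r s))} {h : List (Step n r s)}
    (hh : h ∉ Q) : failValue Q 0 h = 1 :=
  Set.indicator_of_mem (Set.mem_compl hh) _

lemma failValue_mono_of_suffix {Q Q' : Set (List (Step n r s))} {h₀ : List (Step n r s)}
    (hQ : ∀ h, h₀ <:+ h → h ∈ Q → h ∈ Q') (T : ℕ) : failValue Q' T h₀ ≤ failValue Q T h₀ := by
  suffices ∀ h, h₀ <:+ h → failValue Q' T h ≤ failValue Q T h from this h₀ (List.suffix_refl _)
  induction T with
  | zero =>
    intro h hh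
    by_cases hq : h ∈ Q
    · simp only [failValue_zero_of_mem (hQ h hh hq), zero_le]
    · rw [failValue_zero_of_notMem hq]
      exact Set.indicator_le_self _ _ _
  | succ T ih =>
    exact fun h hh => expect_mono _ fun U => iInf_mono fun W =>
      ih _ (hh.trans (List.suffix_cons _ _))

/-- The optimal strategy may depend on time only through the length of the history. -/
lemma exists_strategy_expect_eq_failValue [Nonempty (Col n (s - r))]
    (Q : Set (List (Step n r s))) (T : ℕ) :
    ∃ S : Strategy n r s, expect (historyPMF ‹_› S T) (Qᶜ.indicator 1) = failValue Q T [] := by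
  have exists_reply (h : List (Step n r s)) (U : Col n r) : ∃ W : Col n (s - r),
      failValue Q (T - (h.length + 1)) ((U, W) :: h) =
        ⨅ W, failValue Q (T - (h.length + 1)) ((U, W) :: h) :=
    exists_eq_ciInf_of_finite
  choose reply hreply using exists_reply
  let S : Strategy n r s := fun h U => PMF.pure (reply h U)
  have expect_eq (t : ℕ) (ht : t ≤ T) :
      expect (historyPMF ‹_› S t) (failValue Q (T - t)) = failValue Q T [] := by
    induction t with
    | zero => exact expect_pure _ _
    | succ t ih =>
      rw [← ih (by omega), expect_historyPMF_succ]
      refine expect_congr _ fun h hh => ?_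
      obtain rfl := length_eq_of_mem_support _ _ _ h hh
      rw [show T - h.length = T - (h.length + 1) + 1 by omega, failValue]
      simp only [S, expect_pure, hreply]
  refine ⟨S, ?_⟩
  rw [← expect_eq T le_rfl, Nat.sub_self]
  rfl

section Reply

variable [Nonempty (Col n (s - r))]

lemma failValue_le_one (Q : Set (List (Step n r s))) (T : ℕ) (h : List (Step n r s)) :
    failValue Q T h ≤ 1 := by
  induction T generalizing h with
  | zero => exact Set.indicator_le_self _ _ _
  | succ T ih =>
    exact expect_le_of_forall_le _ fun U => (iInf_le _ (Classical.arbitrary _)).trans (ih _)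

lemma failValue_eq_zero_of_mem {Q : Set (List (Step n r s))} (hQ : ∀ p, ∀ h ∈ Q, p :: h ∈ Q)
    (T : ℕ) {h : List (Step n r s)} (hh : h ∈ Q) : failValue Q T h = 0 := by
  induction T generalizing h with
  | zero => exact failValue_zero_of_mem hh
  | succ T ih => simp only [failValue, ih (hQ _ h hh), iInf_const, expect_const]

/-- First play for `Q`, then, once in `Q`, play for `Q'`. -/
lemma failValue_add_le {Q Q' : Set (List (Step n r s))} {T' : ℕ} {δ : ℝ≥0∞}
    (hQ : ∀ h ∈ Q, failValue Q' T' h ≤ δ) (T : ℕ) (h : List (Step n r s)) :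
    failValue Q' (T + T') h ≤ failValue Q T h + δ := by
  induction T generalizing h with
  | zero =>
    rw [zero_add]
    by_cases hh : h ∈ Q
    · exact (hQ h hh).trans le_add_self
    · rw [failValue_zero_of_notMem hh]
      exact (failValue_le_one _ _ _).trans le_self_add
  | succ T ih =>
    rw [Nat.succ_add, failValue, failValue, ← expect_const (PMF.uniformOfFintype (Col n r)) δ,
      ← expect_add]
    simp only [ENNReal.iInf_add]
    exact expect_mono _ fun U => iInf_mono fun W => ih _

end Reply

lemma failValue_le_pow_mul {Q : Set (List (Step n r s))} (hQ : ∀ p, ∀ h ∈ Q, p :: h ∈ Q)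
    (W : Col n (s - r)) {Φ : List (Step n r s) → ℝ≥0∞} {ρ : ℝ≥0∞} (hΦ : ∀ h ∉ Q, 1 ≤ Φ h)
    (hstep : ∀ h ∉ Q,
      expect (PMF.uniformOfFintype (Col n r)) (fun U => Φ ((U, W) :: h)) ≤ ρ * Φ h)
    (T : ℕ) (h : List (Step n r s)) : failValue Q T h ≤ ρ ^ T * Φ h := by
  have : Nonempty (Col n (s - r)) := ⟨W⟩
  induction T generalizing h with
  | zero =>
    rw [pow_zero, one_mul]
    by_cases hh : h ∈ Q
    · simp only [failValue_zero_of_mem hh, zero_le]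
    · exact (failValue_le_one _ _ _).trans (hΦ h hh)
  | succ T ih =>
    by_cases hh : h ∈ Q
    · simp only [failValue_eq_zero_of_mem hQ _ hh, zero_le]
    calc failValue Q (T + 1) h
        ≤ expect (PMF.uniformOfFintype (Col n r)) fun U => ρ ^ T * Φ ((U, W) :: h) :=
          expect_mono _ fun U => (iInf_le _ W).trans (ih _)
      _ ≤ ρ ^ T * (ρ * Φ h) := by
          rw [expect_const_mul]
          gcongr
          exact hstep h hh
      _ = ρ ^ (T + 1) * Φ h := by ring

end FailValue

/-! ### The upper bound -/

section Growth

variable {n s : ℕ}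

lemma sum_one_sub_ite_half_le (A : Finset (Fin n)) {x : ℝ} (hx : x ≤ A.card) :
    ∑ u, (1 - if u ∈ A then 1 / 2 else 0 : ℝ) ≤ n * Real.exp (-(x / (2 * n))) := by
  rcases n.eq_zero_or_pos with rfl | hn
  · simp
  calc ∑ u, (1 - if u ∈ A then 1 / 2 else 0 : ℝ) = n - A.card / 2 := by
        rw [Finset.sum_sub_distrib, ← Finset.sum_filter]
        simp [div_eq_mul_inv]
    _ ≤ n * (-(x / (2 * n)) + 1) := by
        rw [mul_add, mul_neg, mul_one, show (n : ℝ) * (x / (2 * n)) = x / 2 by field_simp]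
        linarith
    _ ≤ n * Real.exp (-(x / (2 * n))) := by
        gcongr
        exact Real.add_one_le_exp _

/-- Each of the at least `x` vertices of `B \ C` divides `exp (-#C)` by `e ≥ 2`. -/
lemma sum_exp_neg_card_le {B C : Finset (Fin n)} {C' : Fin n → Finset (Fin n)}
    (hC : ∀ u, C ⊆ C' u) (hB : ∀ u ∈ B, u ∈ C' u) {x : ℝ} (hx : x ≤ (B \ C).card) :
    ∑ u, Real.exp (-(C' u).card) ≤ n * Real.exp (-(x / (2 * n))) * Real.exp (-C.card) := by
  have factor (u : Fin n) : Real.exp (-(C' u).card) ≤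
      (1 - if u ∈ B \ C then 1 / 2 else 0) * Real.exp (-C.card) := by
    split_ifs with hu
    · obtain ⟨huB, huC⟩ := Finset.mem_sdiff.1 hu
      have card_succ_le : (C.card : ℝ) + 1 ≤ (C' u).card := by
        rw [← Nat.cast_add_one, ← Finset.card_insert_of_notMem huC]
        exact Nat.cast_le.2 (Finset.card_le_card (Finset.insert_subset (hB u huB) (hC u)))
      calc Real.exp (-(C' u).card)
          ≤ Real.exp (-1 + -C.card) := Real.exp_le_exp.2 (by linarith)
        _ = Real.exp (-1) * Real.exp (-C.card) := Real.exp_add _ _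
        _ ≤ (1 - 1 / 2) * Real.exp (-C.card) := by
            gcongr
            linarith [Real.exp_neg_one_lt_half]
    · rw [sub_zero, one_mul, Real.exp_le_exp]
      gcongr
      exact hC u
  calc ∑ u, Real.exp (-(C' u).card)
      ≤ (∑ u, (1 - if u ∈ B \ C then 1 / 2 else 0 : ℝ)) * Real.exp (-C.card) := by
        rw [Finset.sum_mul]
        exact Finset.sum_le_sum fun u _ => factor u
    _ ≤ n * Real.exp (-(x / (2 * n))) * Real.exp (-C.card) := by
        gcongr
        exact sum_one_sub_ite_half_le _ hx

lemma natCast_ne_zero_of_nonempty_col [Nonempty (Col n 1)] : (n : ℝ≥0∞) ≠ 0 := by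
  obtain ⟨⟨u⟩⟩ := (Equiv.ofBijective _ (single_bijective (n := n))).nonempty_congr.2 ‹_›
  exact Nat.cast_ne_zero.2 (by omega)

lemma expect_exp_neg_card_le [Nonempty (Col n 1)] {B C : Finset (Fin n)}
    {C' : Col n 1 → Finset (Fin n)} (hC : ∀ U, C ⊆ C' U) (hB : ∀ u ∈ B, u ∈ C' (single u))
    {b : ℝ} (hb : C.card ≤ b) :
    expect (PMF.uniformOfFintype (Col n 1))
        (fun U => ENNReal.ofReal (Real.exp (-(C' U).card))) ≤
      ENNReal.ofReal (Real.exp (-((B.card - b) / (2 * n)))) *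
        ENNReal.ofReal (Real.exp (-C.card)) := by
  have card_sdiff_ge : B.card - b ≤ ((B \ C).card : ℝ) := by
    have : (B.card : ℝ) ≤ (B \ C).card + C.card := by
      exact_mod_cast Finset.card_le_card_sdiff_add_card
    linarith
  rw [expect_uniformOfFintype_single, ← ENNReal.ofReal_sum_of_nonneg fun _ _ => by positivity,
    ← ENNReal.ofReal_mul (by positivity)]
  calc (n : ℝ≥0∞)⁻¹ * ENNReal.ofReal (∑ u, Real.exp (-(C' (single u)).card))
      ≤ (n : ℝ≥0∞)⁻¹ * ENNReal.ofReal
          (n * (Real.exp (-((B.card - b) / (2 * n))) * Real.exp (-C.card))) := by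
        gcongr
        rw [← mul_assoc]
        exact sum_exp_neg_card_le (fun u => hC (single u)) hB card_sdiff_ge
    _ = ENNReal.ofReal (Real.exp (-((B.card - b) / (2 * n))) * Real.exp (-C.card)) := by
        rw [ENNReal.ofReal_mul n.cast_nonneg, ENNReal.ofReal_natCast,
          ENNReal.inv_mul_cancel_left natCast_ne_zero_of_nonempty_col (ENNReal.natCast_ne_top n)]

lemma failValue_card_le [Nonempty (Col n 1)] (B : Finset (Fin n)) (W : Col n (s - 1))
    {C : List (Step n 1 s) → Finset (Fin n)} (hmono : ∀ p h, C h ⊆ C (p :: h))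
    (hhit : ∀ h, ∀ u ∈ B, u ∈ C ((single u, W) :: h)) (b' : ℝ) (T : ℕ)
    (h : List (Step n 1 s)) :
    failValue {h | b' ≤ (C h).card} T h ≤
      ENNReal.ofReal (Real.exp (b' - (B.card - b') / (2 * n) * T)) := by
  have exp_sub (h) : ENNReal.ofReal (Real.exp (b' - (C h).card)) =
      ENNReal.ofReal (Real.exp b') * ENNReal.ofReal (Real.exp (-(C h).card)) := by
    rw [← ENNReal.ofReal_mul (by positivity), ← Real.exp_add, sub_eq_add_neg]
  refine (failValue_le_pow_mul (fun p h hh => ?_) W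
    (Φ := fun h => ENNReal.ofReal (Real.exp (b' - (C h).card)))
    (ρ := ENNReal.ofReal (Real.exp (-((B.card - b') / (2 * n)))))
    (fun h hh => ?_) (fun h hh => ?_) T h).trans ?_
  · rw [Set.mem_ofPred_eq] at hh ⊢
    exact hh.trans (Nat.cast_le.2 (Finset.card_le_card (hmono p h)))
  · rw [Set.mem_ofPred_eq, not_le] at hh
    exact ENNReal.one_le_ofReal.2 (Real.one_le_exp (sub_nonneg.2 hh.le))
  · rw [Set.mem_ofPred_eq, not_le] at hh
    simp only [exp_sub, expect_const_mul]
    rw [mul_left_comm]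
    gcongr
    exact expect_exp_neg_card_le (fun U => hmono (U, W) h) (hhit h) hh.le
  · rw [← ENNReal.ofReal_pow (by positivity), ← ENNReal.ofReal_mul (by positivity),
      ← Real.exp_nat_mul, ← Real.exp_add]
    gcongr
    linarith [(C h).card.cast_nonneg (α := ℝ)]

end Growth

section Edges

variable {V : Type*} {n r s : ℕ}

/-- The edges of the multi-hypergraph with history `h`. -/
def edges (h : List (Step n r s)) : List (Multiset (Fin n)) :=
  h.map fun p => p.1.1.val + p.2.1.val

lemma containsCopy_iff {E : Finset (Finset V)} {h : List (Step n r s)} :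
    ContainsCopy E h ↔ ∃ φ : V ↪ Fin n, ∀ e ∈ E, e.val.map φ ∈ edges h := by
  simp only [ContainsCopy, edges, List.mem_map, eq_comm]

lemma edges_subset_of_suffix {h h' : List (Step n r s)} (hh : h <:+ h') : edges h ⊆ edges h' :=
  List.map_subset _ hh.subset

end Edges

section Induced

variable {V : Type*} [DecidableEq V]

/-- The edges of `E` contained in `S`. -/
def inducedEdges (E : Finset (Finset V)) (S : Finset V) : Finset (Finset V) :=
  E.filter (· ⊆ S)

/-- The edges of `E` that contain `v` and are contained in `S`. -/
def incidentEdges (E : Finset (Finset V)) (S : Finset V) (v : V) : Finset (Finset V) :=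
  E.filter fun e => v ∈ e ∧ e ⊆ S

lemma mem_inducedEdges {E : Finset (Finset V)} {S e : Finset V} :
    e ∈ inducedEdges E S ↔ e ∈ E ∧ e ⊆ S :=
  Finset.mem_filter

lemma mem_incidentEdges {E : Finset (Finset V)} {S e : Finset V} {v : V} :
    e ∈ incidentEdges E S v ↔ e ∈ E ∧ v ∈ e ∧ e ⊆ S :=
  Finset.mem_filter

lemma inducedEdges_eq_union (E : Finset (Finset V)) (S : Finset V) (v : V) :
    inducedEdges E S = inducedEdges E (S.erase v) ∪ incidentEdges E S v := by
  ext e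
  simp only [Finset.mem_union, mem_inducedEdges, mem_incidentEdges, Finset.subset_erase]
  tauto

lemma card_inducedEdges (E : Finset (Finset V)) (S : Finset V) (v : V) :
    (inducedEdges E S).card =
      (inducedEdges E (S.erase v)).card + (incidentEdges E S v).card := by
  rw [inducedEdges_eq_union E S v, Finset.card_union_of_disjoint]
  refine Finset.disjoint_left.2 fun e he he' => ?_
  exact (Finset.subset_erase.1 (mem_inducedEdges.1 he).2).2 (mem_incidentEdges.1 he').2.1

end Induced

section Embedding

variable {V : Type*} [DecidableEq V] {n s : ℕ}

/-- Given an embedding `φ` of the vertices in `S`, the possible images of the further vertex `v`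
for which all the edges in `F` are present. -/
def candidates (φ : V ↪ Fin n) (S : Finset V) (v : V) (F : Finset (Finset V))
    (h : List (Step n 1 s)) : Finset (Fin n) :=
  Finset.univ.filter fun u =>
    u ∉ S.map φ ∧ ∀ e ∈ F, u ::ₘ (e.erase v).val.map φ ∈ edges h

lemma mem_candidates {φ : V ↪ Fin n} {S : Finset V} {v : V} {F : Finset (Finset V)}
    {h : List (Step n 1 s)} {u : Fin n} : u ∈ candidates φ S v F h ↔
      u ∉ S.map φ ∧ ∀ e ∈ F, u ::ₘ (e.erase v).val.map φ ∈ edges h := by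
  simp only [candidates, Finset.mem_filter_univ]

lemma sub_card_le_card_candidates_empty [Fintype V] (φ : V ↪ Fin n) (S : Finset V) (v : V)
    (h : List (Step n 1 s)) :
    (n : ℝ) - Fintype.card V ≤ (candidates φ S v ∅ h).card := by
  have candidates_eq : candidates φ S v ∅ h = (S.map φ)ᶜ := by
    ext u
    simp [mem_candidates]
  have card_le : S.card ≤ Fintype.card V := S.card_le_univ
  have := (S.map φ).card_add_card_compl
  rw [Finset.card_map, Fintype.card_fin] at this
  rw [candidates_eq, sub_le_iff_le_add]
  exact_mod_cast (by omega : n ≤ (S.map φ)ᶜ.card + Fintype.card V)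

lemma map_setValue_val {φ : V ↪ Fin n} {S : Finset V} {v : V} {u : Fin n} (hu : u ∉ S.map φ)
    {e : Finset V} (he : e ⊆ S) (hv : v ∉ e) :
    e.val.map (φ.setValue v u) = e.val.map φ := by
  refine Multiset.map_congr rfl fun y hy => Function.Embedding.setValue_eq_of_ne ?_ ?_
  · exact fun hyv => hv (hyv ▸ hy)
  · exact fun hyu => hu (Finset.mem_map.2 ⟨y, he hy, hyu⟩)

lemma containsCopy_inducedEdges {E : Finset (Finset V)} {S : Finset V} {v : V}
    {h : List (Step n 1 s)} {φ : V ↪ Fin n}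
    (hφ : ∀ e ∈ inducedEdges E (S.erase v), e.val.map φ ∈ edges h) {u : Fin n}
    (hu : u ∈ candidates φ (S.erase v) v (incidentEdges E S v) h) :
    ContainsCopy (inducedEdges E S) h := by
  obtain ⟨hu, hinc⟩ := mem_candidates.1 hu
  refine containsCopy_iff.2 ⟨φ.setValue v u, fun e he => ?_⟩
  rw [inducedEdges_eq_union E S v, Finset.mem_union] at he
  rcases he with he | he
  · obtain ⟨-, heS⟩ := mem_inducedEdges.1 he
    rw [map_setValue_val hu heS (Finset.subset_erase.1 heS).2]
    exact hφ e he
  · obtain ⟨-, hve, heS⟩ := mem_incidentEdges.1 he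
    have map_eq := map_setValue_val hu (Finset.erase_subset_erase v heS) (Finset.notMem_erase v e)
    rw [← Finset.insert_erase hve, Finset.insert_val_of_notMem (Finset.notMem_erase v e),
      Multiset.map_cons, Function.Embedding.setValue_eq, map_eq]
    exact hinc e he

/-- A schedule of stages of `T` rounds, each of which realises one more of the at most `d` edges at
a new vertex: after `j` stages at least `b j` candidates for the new vertex are to be left, and each
stage may fail with probability at most `exp (-L)`. -/
structure IsSchedule (n m d T : ℕ) (L : ℝ) (b : ℕ → ℝ) : Prop where
  initial : b 0 ≤ n - m
  pos : ∀ j ≤ d, 0 < b j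
  decay : ∀ j < d, b (j + 1) + L ≤ (b j - b (j + 1)) / (2 * n) * T

lemma failValue_candidates_insert_le [Nonempty (Col n 1)] (φ : V ↪ Fin n) (S : Finset V) {v : V}
    {F : Finset (Finset V)} {e : Finset V} (hes : e.card = s) (hve : v ∈ e) {T : ℕ} {L b b' : ℝ}
    (hb : b' + L ≤ (b - b') / (2 * n) * T) {h : List (Step n 1 s)}
    (hh : b ≤ (candidates φ S v F h).card) :
    failValue {h' | b' ≤ (candidates φ S v (insert e F) h').card} T h ≤
      ENNReal.ofReal (Real.exp (-L)) := by
  set B := candidates φ S v F h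
  let W : Col n (s - 1) :=
    ⟨(e.erase v).map φ, by rw [Finset.card_map, Finset.card_erase_of_mem hve, hes]⟩
  let C (h' : List (Step n 1 s)) : Finset (Fin n) :=
    B.filter fun u => u ::ₘ (e.erase v).val.map φ ∈ edges h'
  have C_subset (h') (hh' : h <:+ h') : C h' ⊆ candidates φ S v (insert e F) h' := by
    intro u hu
    obtain ⟨huB, hue⟩ := Finset.mem_filter.1 hu
    obtain ⟨huS, huF⟩ := mem_candidates.1 huB
    exact mem_candidates.2 ⟨huS, Finset.forall_mem_insert _ _ _ |>.2
      ⟨hue, fun e' he' => edges_subset_of_suffix hh' (huF e' he')⟩⟩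
  calc failValue {h' | b' ≤ (candidates φ S v (insert e F) h').card} T h
      ≤ failValue {h' | b' ≤ (C h').card} T h := failValue_mono_of_suffix (fun h' hh' hC =>
        le_trans (Set.mem_ofPred_eq ▸ hC) (Nat.cast_le.2 (Finset.card_le_card (C_subset h' hh')))) T
    _ ≤ ENNReal.ofReal (Real.exp (b' - (B.card - b') / (2 * n) * T)) := by
        refine failValue_card_le B W (fun p h' => ?_) (fun h' u hu => ?_) b' T h
        · exact Finset.monotone_filter_right _ fun u _ hu =>
            edges_subset_of_suffix (List.suffix_cons _ _) hu
        · exact Finset.mem_filter.2 ⟨hu, List.mem_cons_self ..⟩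
    _ ≤ ENNReal.ofReal (Real.exp (-L)) := by
        have : (b - b') / (2 * n) * T ≤ (B.card - b') / (2 * n) * T := by gcongr
        gcongr
        linarith

variable [Fintype V] {d T : ℕ} {L : ℝ} {b : ℕ → ℝ} [Nonempty (Col n 1)]
  [Nonempty (Col n (s - 1))]

lemma IsSchedule.failValue_candidates_le (hb : IsSchedule n (Fintype.card V) d T L b)
    (φ : V ↪ Fin n) (S : Finset V) (v : V) (F : Finset (Finset V))
    (hF : ∀ e ∈ F, e.card = s ∧ v ∈ e) (hd : F.card ≤ d) (h : List (Step n 1 s)) :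
    failValue {h' | b F.card ≤ (candidates φ S v F h').card} (F.card * T) h ≤
      F.card * ENNReal.ofReal (Real.exp (-L)) := by
  induction F using Finset.induction_on with
  | empty =>
    rw [Finset.card_empty, Nat.zero_mul, failValue_zero_of_mem]
    · exact zero_le
    · exact hb.initial.trans (sub_card_le_card_candidates_empty φ S v h)
  | insert e F heF ih =>
    rw [Finset.forall_mem_insert] at hF
    rw [Finset.card_insert_of_notMem heF] at hd ⊢
    rw [Nat.succ_mul, Nat.cast_succ, add_one_mul]
    refine (failValue_add_le (fun h' hh' => ?_) _ h).trans
      (add_le_add_left (ih hF.2 (by omega)) _)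
    exact failValue_candidates_insert_le φ S hF.1.1 hF.1.2 (hb.decay _ hd) hh'

lemma IsSchedule.failValue_inducedEdges_le (hb : IsSchedule n (Fintype.card V) d T L b)
    {E : Finset (Finset V)} {S : Finset V} {v : V} (hunif : ∀ e ∈ E, e.card = s)
    (hd : (incidentEdges E S v).card ≤ d) {h : List (Step n 1 s)}
    (hh : ContainsCopy (inducedEdges E (S.erase v)) h) :
    failValue {h' | ContainsCopy (inducedEdges E S) h'} ((incidentEdges E S v).card * T) h ≤
      (incidentEdges E S v).card * ENNReal.ofReal (Real.exp (-L)) := by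
  obtain ⟨φ, hφ⟩ := containsCopy_iff.1 hh
  refine (failValue_mono_of_suffix (fun h' hh' hcand => ?_) _).trans
    (hb.failValue_candidates_le φ (S.erase v) v (incidentEdges E S v) (fun e he => ?_) hd h)
  · obtain ⟨u, hu⟩ : (candidates φ (S.erase v) v (incidentEdges E S v) h').Nonempty :=
      Finset.card_pos.1 (Nat.cast_pos.1 ((hb.pos _ hd).trans_le hcand))
    exact containsCopy_inducedEdges (fun e he => edges_subset_of_suffix hh' (hφ e he)) hu
  · obtain ⟨heE, hve, -⟩ := mem_incidentEdges.1 he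
    exact ⟨hunif e heE, hve⟩

/-- Embed the vertices one at a time, in the reverse of a degeneracy ordering. -/
lemma IsSchedule.failValue_le (hb : IsSchedule n (Fintype.card V) d T L b) (hs : 1 ≤ s)
    {E : Finset (Finset V)} (hunif : ∀ e ∈ E, e.card = s) (hE : Degen E d) :
    failValue {h : List (Step n 1 s) | ContainsCopy E h} (E.card * T) [] ≤
      E.card * ENNReal.ofReal (Real.exp (-L)) := by
  suffices ∀ S, failValue {h : List (Step n 1 s) | ContainsCopy (inducedEdges E S) h}
      ((inducedEdges E S).card * T) [] ≤
        (inducedEdges E S).card * ENNReal.ofReal (Real.exp (-L)) by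
    have inducedEdges_univ : inducedEdges E Finset.univ = E :=
      Finset.filter_true_of_mem fun e _ => e.subset_univ
    simpa only [inducedEdges_univ] using this Finset.univ
  intro S
  induction S using Finset.strongInduction with | H S ih =>
  rcases S.eq_empty_or_nonempty with rfl | hS
  · have inducedEdges_empty : inducedEdges E ∅ = ∅ := by
      refine Finset.filter_false_of_mem fun e he hempty => ?_
      have := hunif e he
      rw [Finset.subset_empty.1 hempty, Finset.card_empty] at this
      omega
    have card_le : Fintype.card V ≤ Fintype.card (Fin n) := by
      have := (hb.pos 0 d.zero_le).trans_le hb.initial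
      rw [Fintype.card_fin]
      exact_mod_cast (sub_pos.1 this).le
    obtain ⟨φ⟩ := Function.Embedding.nonempty_of_card_le card_le
    rw [inducedEdges_empty, Finset.card_empty, Nat.zero_mul, failValue_zero_of_mem]
    · exact zero_le
    · exact containsCopy_iff.2 ⟨φ, by simp only [Finset.notMem_empty, false_imp_iff, implies_true]⟩
  · obtain ⟨v, hvS, hv⟩ := hE S hS
    rw [card_inducedEdges E S v, add_mul, Nat.cast_add, add_mul]
    exact (failValue_add_le (fun h hh => hb.failValue_inducedEdges_le hunif hv hh) _ []).trans
      (add_le_add_left (ih _ (Finset.erase_ssubset hvS)) _)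

end Embedding

section Tau

variable {V : Type*} {n r s : ℕ} {E : Finset (Finset V)} {q : ℝ≥0∞}

lemma tauQ_le (S : Strategy n r s) {t : ℕ} (ht : q ≤ probContains n r s E S t) :
    tauQ r s E q n ≤ t :=
  (iInf_le _ S).trans (sInf_le ⟨t, rfl, ht⟩)

lemma le_tauQ {c : ℕ∞}
    (hc : ∀ (S : Strategy n r s) (t : ℕ), q ≤ probContains n r s E S t → c ≤ t) :
    c ≤ tauQ r s E q n := by
  refine le_iInf fun S => le_sInf ?_
  rintro _ ⟨t, rfl, ht⟩
  exact hc S t ht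

end Tau

section UpperFinite

variable {V : Type*} [Fintype V] [DecidableEq V] {n s d T : ℕ} {L : ℝ} {b : ℕ → ℝ}

lemma IsSchedule.tauQ_le (hb : IsSchedule n (Fintype.card V) d T L b) (hs : 1 ≤ s) (hsn : s ≤ n)
    {E : Finset (Finset V)} (hunif : ∀ e ∈ E, e.card = s) (hE : Degen E d) {q : ℝ≥0∞}
    (hq : q + E.card * ENNReal.ofReal (Real.exp (-L)) ≤ 1) :
    tauQ 1 s E q n ≤ (E.card * T : ℕ) := by
  have hn : 1 ≤ n := hs.trans hsn
  have := col_nonempty hn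
  have := col_nonempty (show s - 1 ≤ n by omega)
  let Q : Set (List (Step n 1 s)) := {h | ContainsCopy E h}
  obtain ⟨S, hS⟩ := exists_strategy_expect_eq_failValue Q (E.card * T)
  refine SemiRandomHypergraph.tauQ_le S ?_
  rw [probContains, dif_pos hn]
  have prob_add_fail := toOuterMeasure_add_expect_indicator_compl
    (historyPMF (col_nonempty hn) S (E.card * T)) Q
  have fail_le : failValue Q (E.card * T) [] ≤ E.card * ENNReal.ofReal (Real.exp (-L)) :=
    hb.failValue_le hs hunif hE
  have fail_ne_top : E.card * ENNReal.ofReal (Real.exp (-L)) ≠ ⊤ :=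
    ENNReal.mul_ne_top (ENNReal.natCast_ne_top _) ENNReal.ofReal_ne_top
  refine ENNReal.le_of_add_le_add_right fail_ne_top (hq.trans ?_)
  rw [← prob_add_fail, hS]
  gcongr

end UpperFinite

/-! ### The lower bound -/

section Hits

variable {n r s : ℕ}

/-- The vertices drawn in some round before which they belonged to `A`. -/
def hitIn (A : List (Step n r s) → Finset (Fin n)) : List (Step n r s) → Finset (Fin n)
  | [] => ∅
  | p :: h => hitIn A h ∪ p.1.1 ∩ A h

lemma mem_hitIn_of_suffix {A : List (Step n r s) → Finset (Fin n)} {h h' : List (Step n r s)}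
    {p : Step n r s} (hh : p :: h' <:+ h) {u : Fin n} (hu : u ∈ p.1.1) (hA : u ∈ A h') :
    u ∈ hitIn A h := by
  induction h with
  | nil => exact absurd (List.suffix_nil.1 hh) (List.cons_ne_nil _ _)
  | cons p₀ h ih =>
    rcases List.suffix_cons_iff.1 hh with heq | hh
    · obtain ⟨rfl, rfl⟩ := List.cons.inj heq
      exact Finset.mem_union_right _ (Finset.mem_inter.2 ⟨hu, hA⟩)
    · exact Finset.mem_union_left _ (ih hh)

lemma expect_card_hitIn_succ_le (h0 : Nonempty (Col n 1)) (S : Strategy n 1 s)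
    (A : List (Step n 1 s) → Finset (Fin n)) (t : ℕ) :
    expect (historyPMF h0 S (t + 1)) (fun h => ((hitIn A h).card : ℝ≥0∞)) ≤
      expect (historyPMF h0 S t) (fun h => ((hitIn A h).card : ℝ≥0∞)) +
        (n : ℝ≥0∞)⁻¹ * expect (historyPMF h0 S t) (fun h => ((A h).card : ℝ≥0∞)) := by
  have expect_card_inter (h : List (Step n 1 s)) :
      expect (PMF.uniformOfFintype (Col n 1)) (fun U => ((U.1 ∩ A h).card : ℝ≥0∞)) =
        (n : ℝ≥0∞)⁻¹ * (A h).card := by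
    rw [expect_uniformOfFintype_single]
    simp [single, Finset.singleton_inter, apply_ite]
  rw [expect_historyPMF_succ, ← expect_const_mul, ← expect_add]
  refine expect_mono _ fun h => ?_
  rw [← expect_card_inter, ← expect_const (PMF.uniformOfFintype (Col n 1)) (hitIn A h).card,
    ← expect_add]
  refine expect_mono _ fun U => expect_le_of_forall_le _ fun W => ?_
  exact_mod_cast Finset.card_union_le _ _

lemma expect_card_hitIn_le (h0 : Nonempty (Col n 1)) (S : Strategy n 1 s)
    (A : List (Step n 1 s) → Finset (Fin n)) (c : ℝ≥0∞) (t : ℕ)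
    (hA : ∀ i < t, expect (historyPMF h0 S i) (fun h => ((A h).card : ℝ≥0∞)) ≤ c) :
    expect (historyPMF h0 S t) (fun h => ((hitIn A h).card : ℝ≥0∞)) ≤
      t * ((n : ℝ≥0∞)⁻¹ * c) := by
  induction t with
  | zero => simp [historyPMF, expect_pure, hitIn]
  | succ t ih =>
    rw [Nat.cast_succ, add_one_mul]
    refine (expect_card_hitIn_succ_le h0 S A t).trans ?_
    gcongr
    · exact ih fun i hi => hA i (hi.trans t.lt_succ_self)
    · exact hA t t.lt_succ_self

lemma expect_card_le_pow (h0 : Nonempty (Col n 1)) (S : Strategy n 1 s)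
    {A : ℕ → List (Step n 1 s) → Finset (Fin n)} {M d : ℕ}
    (hA : ∀ j < d, ∀ h, (A (j + 1) h).card ≤ M * (hitIn (A j) h).card) (t : ℕ) :
    expect (historyPMF h0 S t) (fun h => ((A d h).card : ℝ≥0∞)) ≤
      n * (M * t * (n : ℝ≥0∞)⁻¹) ^ d := by
  induction d generalizing t with
  | zero =>
    refine expect_le_of_forall_le _ fun h => ?_
    simpa using (A 0 h).card_le_univ
  | succ d ih =>
    have ih := ih fun j hj => hA j (hj.trans d.lt_succ_self)
    calc expect (historyPMF h0 S t) (fun h => ((A (d + 1) h).card : ℝ≥0∞))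
        ≤ expect (historyPMF h0 S t) (fun h => M * ((hitIn (A d) h).card : ℝ≥0∞)) :=
          expect_mono _ fun h => mod_cast hA d d.lt_succ_self h
      _ ≤ M * (t * ((n : ℝ≥0∞)⁻¹ * (n * (M * t * (n : ℝ≥0∞)⁻¹) ^ d))) := by
          rw [expect_const_mul]
          gcongr
          refine expect_card_hitIn_le h0 S _ _ t fun i hi => (ih i).trans ?_
          gcongr
      _ = n * (M * t * (n : ℝ≥0∞)⁻¹) ^ (d + 1) := by ring

/-- The number of rounds in which `u` was drawn. -/
def hitCount (h : List (Step n r s)) (u : Fin n) : ℕ := h.countP fun p => u ∈ p.1.1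

/-- The vertices drawn at least `j` times. -/
def hitSet (j : ℕ) (h : List (Step n r s)) : Finset (Fin n) :=
  Finset.univ.filter fun u => j ≤ hitCount h u

lemma mem_hitSet {j : ℕ} {h : List (Step n r s)} {u : Fin n} :
    u ∈ hitSet j h ↔ j ≤ hitCount h u :=
  Finset.mem_filter_univ u

lemma hitCount_le_of_suffix {h h' : List (Step n r s)} (hh : h' <:+ h) (u : Fin n) :
    hitCount h' u ≤ hitCount h u :=
  hh.sublist.countP_le

lemma hitSet_succ_subset (j : ℕ) (h : List (Step n r s)) :
    hitSet (j + 1) h ⊆ hitIn (hitSet j) h := by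
  intro u hu
  rw [mem_hitSet] at hu
  induction h with
  | nil => simp [hitCount] at hu
  | cons p h ih =>
    rw [hitCount, List.countP_cons] at hu
    by_cases hp : u ∈ p.1.1
    · rw [if_pos (decide_eq_true hp), Nat.add_le_add_iff_right] at hu
      exact Finset.mem_union_right _ (Finset.mem_inter.2 ⟨hp, mem_hitSet.2 hu⟩)
    · rw [if_neg (by simpa using hp), Nat.add_zero] at hu
      exact Finset.mem_union_left _ (ih hu)

/-- The vertices in the replies to the rounds in which `u` was drawn. -/
def outNbrs (h : List (Step n r s)) (u : Fin n) : Finset (Fin n) :=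
  (h.filter fun p => u ∈ p.1.1).toFinset.biUnion fun p => p.2.1

lemma mem_outNbrs {h : List (Step n r s)} {u w : Fin n} :
    w ∈ outNbrs h u ↔ ∃ p ∈ h, u ∈ p.1.1 ∧ w ∈ p.2.1 := by
  simp [outNbrs, and_assoc]

lemma outNbrs_subset_of_suffix {h h' : List (Step n r s)} (hh : h' <:+ h) (u : Fin n) :
    outNbrs h' u ⊆ outNbrs h u := by
  intro w hw
  obtain ⟨p, hp, hpw⟩ := mem_outNbrs.1 hw
  exact mem_outNbrs.2 ⟨p, hh.subset hp, hpw⟩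

lemma card_outNbrs_le (h : List (Step n r s)) (u : Fin n) :
    (outNbrs h u).card ≤ hitCount h u * (s - r) := by
  refine (Finset.card_biUnion_le_card_mul _ _ (s - r) fun p _ => p.2.2.le).trans ?_
  gcongr
  rw [hitCount, List.countP_eq_length_filter]
  exact List.toFinset_card_le _

end Hits

section Ball

variable {α : Type*} [DecidableEq α]

/-- The points reachable from a given point in at most `i` steps of the out-neighbour map `N`. -/
def ball (N : α → Finset α) : ℕ → α → Finset α
  | 0, a => {a}
  | i + 1, a => insert a ((N a).biUnion (ball N i))

lemma card_ball_le {N : α → Finset α} {m : ℕ} (hN : ∀ a, (N a).card ≤ m) (i : ℕ) (a : α) :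
    (ball N i a).card ≤ (1 + m) ^ i := by
  induction i generalizing a with
  | zero => exact (Finset.card_singleton a).le
  | succ i ih =>
    calc (ball N (i + 1) a).card ≤ ((N a).biUnion (ball N i)).card + 1 :=
          Finset.card_insert_le _ _
      _ ≤ m * (1 + m) ^ i + (1 + m) ^ i := by
          gcongr
          · refine (Finset.card_biUnion_le_card_mul _ _ _ fun b _ => ih b).trans ?_
            gcongr
            exact hN a
          · exact Nat.one_le_pow _ _ (by omega)
      _ = (1 + m) ^ (i + 1) := by ring

lemma mem_ball_succ {N : α → Finset α} {i : ℕ} {a b : α} :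
    b ∈ ball N (i + 1) a ↔ b = a ∨ ∃ c ∈ N a, b ∈ ball N i c := by
  simp only [ball, Finset.mem_insert, Finset.mem_biUnion]

lemma ball_subset_succ (N : α → Finset α) (i : ℕ) (a : α) : ball N i a ⊆ ball N (i + 1) a := by
  induction i generalizing a with
  | zero => exact Finset.singleton_subset_iff.2 (mem_ball_succ.2 (Or.inl rfl))
  | succ i ih =>
    intro b hb
    refine mem_ball_succ.2 ((mem_ball_succ.1 hb).imp_right ?_)
    exact fun ⟨c, hc, hbc⟩ => ⟨c, hc, ih c hbc⟩

lemma mem_ball_map {β : Type*} [DecidableEq β] {N : α → Finset α} {N' : β → Finset β} {f : α → β}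
    (hf : ∀ a, ∀ b ∈ N a, f b ∈ N' (f a)) {i : ℕ} {a b : α} (hb : b ∈ ball N i a) :
    f b ∈ ball N' i (f a) := by
  induction i generalizing a with
  | zero => exact Finset.mem_singleton.2 (congrArg f (Finset.mem_singleton.1 hb))
  | succ i ih =>
    refine mem_ball_succ.2 ((mem_ball_succ.1 hb).imp (congrArg f) ?_)
    exact fun ⟨c, hc, hbc⟩ => ⟨f c, hf a c hc, ih hbc⟩

lemma mem_ball_card_of_reflTransGen [Fintype α] {N : α → Finset α} {a b : α}
    (hab : Relation.ReflTransGen (fun a b => b ∈ N a) a b) :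
    b ∈ ball N (Fintype.card α) a := by
  let P (i : ℕ) : Finset α := Finset.univ.filter fun a => b ∈ ball N i a
  have mem_P {i : ℕ} {a : α} : a ∈ P i ↔ b ∈ ball N i a := Finset.mem_filter_univ a
  have P_subset (i : ℕ) : P i ⊆ P (i + 1) := fun a ha =>
    mem_P.2 (ball_subset_succ N i a (mem_P.1 ha))
  have P_succ_succ {i : ℕ} (hi : P i = P (i + 1)) : P (i + 1) = P (i + 2) := by
    ext a
    rw [mem_P, mem_P, mem_ball_succ, mem_ball_succ (i := i + 1)]
    simp only [← mem_P, hi]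
  have card_stable : (P (Fintype.card α + 1)).card = (P (Fintype.card α)).card :=
    Nat.stabilises_of_monotone (f := fun i => (P i).card)
      (monotone_nat_of_le_succ fun i => Finset.card_le_card (P_subset i))
      (fun i => (P i).card_le_univ)
      (fun i hi => congrArg Finset.card
        (P_succ_succ (Finset.eq_of_subset_of_card_le (P_subset i) hi.ge)))
      (Nat.le_succ _)
  have P_stable : P (Fintype.card α) = P (Fintype.card α + 1) :=
    Finset.eq_of_subset_of_card_le (P_subset _) card_stable.le
  rw [← mem_P]
  induction hab using Relation.ReflTransGen.head_induction_on with
  | refl => exact P_stable ▸ mem_P.2 (mem_ball_succ.2 (Or.inl rfl))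
  | head hac _ ih => exact P_stable ▸ mem_P.2 (mem_ball_succ.2 (Or.inr ⟨_, hac, mem_P.1 ih⟩))

end Ball

lemma map_mem_ball_of_reflTransGen {α β : Type*} [Fintype α] [DecidableEq β]
    {N : β → Finset β} {f : α → β} {a b : α}
    (hab : Relation.ReflTransGen (fun a b => f b ∈ N (f a)) a b) :
    f b ∈ ball N (Fintype.card α) (f a) := by
  classical
  have mem_iff (a b : α) : b ∈ Finset.univ.filter (fun b => f b ∈ N (f a)) ↔ f b ∈ N (f a) :=
    Finset.mem_filter_univ b
  refine mem_ball_map (fun a b => (mem_iff a b).1) (mem_ball_card_of_reflTransGen ?_)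
  simpa only [mem_iff] using hab

lemma exists_cons_suffix_ne {α β : Type*} (f : List α → β) {l : List α} (hl : f l ≠ f []) :
    ∃ a l', a :: l' <:+ l ∧ f (a :: l') = f l ∧ f l' ≠ f (a :: l') := by
  induction l with
  | nil => exact absurd rfl hl
  | cons a l ih =>
    by_cases hal : f l = f (a :: l)
    · obtain ⟨a', l', hsuff, heq, hne⟩ := ih (hal ▸ hl)
      exact ⟨a', l', hsuff.trans (List.suffix_cons a l), heq.trans hal, hne⟩
    · exact ⟨a, l, List.suffix_refl _, rfl, hal⟩

section Dangerous

variable {V : Type*} {n s : ℕ}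

/-- The edge `e` was created, under the vertex map `φ`, in a round whose drawn vertex is in
`φ(D)`. -/
def RealizedAt (φ : V ↪ Fin n) (D : Finset V) (h : List (Step n 1 s)) (e : Finset V) : Prop :=
  ∃ p ∈ h, e.val.map φ = p.1.1.val + p.2.1.val ∧ p.1.1 ⊆ D.map φ

open Classical in
/-- The vertices of `S` from which `x` can be reached along the digraph of `outNbrs`, pulled back
to `S` along `φ`. -/
noncomputable def ancestors (S : Finset V) (φ : V ↪ Fin n) (h : List (Step n 1 s)) (x : V) :
    Finset V :=
  S.filter fun y => Relation.ReflTransGen (fun a b => φ b ∈ outNbrs h (φ a)) y x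

variable {S : Finset V} {φ : V ↪ Fin n} {h h' : List (Step n 1 s)}

lemma mem_ancestors {x y : V} : y ∈ ancestors S φ h x ↔
    y ∈ S ∧ Relation.ReflTransGen (fun a b => φ b ∈ outNbrs h (φ a)) y x := by
  simp only [ancestors, Finset.mem_filter]

lemma ancestors_subset (hh : h' <:+ h) {x z : V} (hz : z ∈ ancestors S φ h x) :
    ancestors S φ h' z ⊆ ancestors S φ h x := by
  intro y hy
  obtain ⟨hyS, hyz⟩ := mem_ancestors.1 hy
  exact mem_ancestors.2 ⟨hyS, (Relation.ReflTransGen.mono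
    (fun a b hab => outNbrs_subset_of_suffix hh (φ a) hab) y z hyz).trans (mem_ancestors.1 hz).2⟩

lemma mem_ancestors_of_edge {p : Step n 1 s} (hp : p ∈ h) {e : Finset V}
    (he : e.val.map φ = p.1.1.val + p.2.1.val) {x y z : V} (hye : y ∈ e)
    (hy : y ∈ ancestors S φ h x) (hzS : z ∈ S) (hz : φ z ∈ p.1.1) :
    z ∈ ancestors S φ h x := by
  have hy' : φ y ∈ p.1.1.val + p.2.1.val := he ▸ Multiset.mem_map_of_mem φ hye
  rcases Multiset.mem_add.1 hy' with hy' | hy'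
  · have : φ y = φ z := Finset.card_le_one.1 p.1.2.le _ hy' _ hz
    exact φ.injective this ▸ hy
  · exact mem_ancestors.2 ⟨hzS, (mem_ancestors.1 hy).2.head (mem_outNbrs.2 ⟨p, hp, hz, hy'⟩)⟩

lemma realizedAt_ancestors {x : V} {e : Finset V} (hmeet : ¬ Disjoint e (ancestors S φ h x))
    {p : Step n 1 s} (hp : p ∈ h) (he : e.val.map φ = p.1.1.val + p.2.1.val)
    (hpS : p.1.1 ⊆ S.map φ) : RealizedAt φ (ancestors S φ h x) h e := by
  refine ⟨p, hp, he, fun u hu => ?_⟩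
  obtain ⟨y, hye, hy⟩ := Finset.not_disjoint_iff.1 hmeet
  obtain ⟨z, hzS, rfl⟩ := Finset.mem_map.1 (hpS hu)
  exact Finset.mem_map_of_mem φ (mem_ancestors_of_edge hp he hye hy hzS hu)

variable [DecidableEq V] {E : Finset (Finset V)}

open Classical in
/-- The edges of the hypergraph induced on `S` that meet `D` and are not yet realised from `D`. -/
noncomputable def missing (E : Finset (Finset V)) (S : Finset V) (φ : V ↪ Fin n) (D : Finset V)
    (h : List (Step n 1 s)) : Finset (Finset V) :=
  (inducedEdges E S).filter fun e => ¬ Disjoint e D ∧ ¬ RealizedAt φ D h e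

open Classical in
/-- As long as no vertex has been drawn `d` times, the images of those vertices of `S` for whose
ancestors at most `k` edges are missing. -/
noncomputable def dangerous (E : Finset (Finset V)) (S : Finset V) (d k : ℕ)
    (h : List (Step n 1 s)) : Finset (Fin n) :=
  Finset.univ.filter fun w => (∀ u, hitCount h u < d) ∧
    ∃ φ : V ↪ Fin n, ∃ x ∈ S, φ x = w ∧ (missing E S φ (ancestors S φ h x) h).card ≤ k

lemma mem_missing {D e : Finset V} : e ∈ missing E S φ D h ↔
    e ∈ inducedEdges E S ∧ ¬ Disjoint e D ∧ ¬ RealizedAt φ D h e := by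
  simp only [missing, Finset.mem_filter]

lemma mem_dangerous {d k : ℕ} {w : Fin n} : w ∈ dangerous E S d k h ↔
    (∀ u, hitCount h u < d) ∧
      ∃ φ : V ↪ Fin n, ∃ x ∈ S, φ x = w ∧ (missing E S φ (ancestors S φ h x) h).card ≤ k := by
  simp only [dangerous, Finset.mem_filter_univ]

lemma missing_ancestors_subset {p : Step n 1 s} {e : Finset V}
    (he : e.val.map φ = p.1.1.val + p.2.1.val) {D : Finset V} (hDS : D ⊆ S) {z : V}
    (hz : ancestors S φ h z ⊆ D) :
    missing E S φ (ancestors S φ h z) h ⊆ insert e (missing E S φ D (p :: h)) := by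
  intro f hf
  obtain ⟨hfS, hmeet, hnot⟩ := mem_missing.1 hf
  rw [Finset.mem_insert, or_iff_not_imp_left]
  refine fun hfe => mem_missing.2 ⟨hfS, fun hdisj => hmeet (hdisj.mono_right hz), ?_⟩
  rintro ⟨p', hp', hf', hp'D⟩
  rcases List.mem_cons.1 hp' with rfl | hp'
  · exact hfe (Finset.val_injective (Multiset.map_injective φ.injective (hf'.trans he.symm)))
  · exact hnot (realizedAt_ancestors hmeet hp' hf'
      (hp'D.trans (Finset.map_subset_map.2 hDS)))

lemma card_incidentEdges_le_card_missing_nil {x : V} {D : Finset V}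
    (hx : x ∈ D) :
    (incidentEdges E S x).card ≤ (missing E S φ D ([] : List (Step n 1 s))).card := by
  refine Finset.card_le_card fun e he => ?_
  obtain ⟨heE, hxe, heS⟩ := mem_incidentEdges.1 he
  refine mem_missing.2 ⟨mem_inducedEdges.2 ⟨heE, heS⟩, ?_, ?_⟩
  · exact Finset.not_disjoint_iff.2 ⟨x, hxe, hx⟩
  · exact fun ⟨p, hp, _⟩ => List.not_mem_nil hp

/-- Look at the last round in which an edge was realised from `D`: before it, one edge more was
missing, even for the smaller set of ancestors of the vertex drawn in that round. -/
lemma exists_drawn_of_card_missing_le {x : V} (hx : x ∈ S) {k : ℕ}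
    (hk : (missing E S φ (ancestors S φ h x) h).card ≤ k)
    (hdeg : k < (incidentEdges E S x).card) :
    ∃ p h', p :: h' <:+ h ∧ ∃ z ∈ ancestors S φ h x, φ z ∈ p.1.1 ∧
      (missing E S φ (ancestors S φ h' z) h').card ≤ k + 1 := by
  have hxx : x ∈ ancestors S φ h x := mem_ancestors.2 ⟨hx, Relation.ReflTransGen.refl⟩
  have hnil := hdeg.trans_le (card_incidentEdges_le_card_missing_nil (φ := φ) (s := s) hxx)
  set D := ancestors S φ h x
  obtain ⟨p, h', hsuff, heq, hne⟩ := exists_cons_suffix_ne (missing E S φ D)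
    fun heq => (hk.trans_lt hnil).ne (congrArg Finset.card heq)
  have missing_subset : missing E S φ D (p :: h') ⊆ missing E S φ D h' := by
    intro e he
    obtain ⟨heS, hmeet, hnot⟩ := mem_missing.1 he
    exact mem_missing.2 ⟨heS, hmeet, fun ⟨p', hp', hr⟩ => hnot ⟨p', List.mem_cons_of_mem p hp', hr⟩⟩
  obtain ⟨e, he, he'⟩ := Finset.exists_of_ssubset (missing_subset.ssubset_of_ne hne.symm)
  obtain ⟨heS, hmeet, hnot⟩ := mem_missing.1 he
  obtain ⟨hep, hpD⟩ : e.val.map φ = p.1.1.val + p.2.1.val ∧ p.1.1 ⊆ D.map φ := by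
    by_contra hcon
    refine he' (mem_missing.2 ⟨heS, hmeet, ?_⟩)
    rintro ⟨p', hp', hr⟩
    rcases List.mem_cons.1 hp' with rfl | hp'
    · exact hcon hr
    · exact hnot ⟨p', hp', hr⟩
  obtain ⟨u, hu⟩ := Finset.card_pos.1 (p.1.2.symm ▸ one_pos)
  obtain ⟨z, hzD, rfl⟩ := Finset.mem_map.1 (hpD hu)
  have hz : ancestors S φ h' z ⊆ D := ancestors_subset ((List.suffix_cons p h').trans hsuff) hzD
  have hDS : D ⊆ S := fun y hy => (mem_ancestors.1 hy).1
  refine ⟨p, h', hsuff, z, hzD, hu, ?_⟩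
  refine (Finset.card_le_card (missing_ancestors_subset hep hDS hz)).trans ?_
  exact (Finset.card_insert_le _ _).trans (Nat.succ_le_succ (heq ▸ hk))

variable {d : ℕ}

lemma ContainsCopy.one_le_card_add_card (hcopy : ContainsCopy E h) (hS : S.Nonempty) :
    1 ≤ (hitSet d h).card + (dangerous E S d 0 h).card := by
  by_cases hhit : ∀ u, hitCount h u < d
  · obtain ⟨φ, hφ⟩ := hcopy
    obtain ⟨x, hxS⟩ := hS
    have missing_eq_empty : missing E S φ (ancestors S φ h x) h = ∅ := by
      refine Finset.eq_empty_of_forall_notMem fun e he => ?_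
      obtain ⟨heES, hmeet, hnot⟩ := mem_missing.1 he
      obtain ⟨heE, heS⟩ := mem_inducedEdges.1 heES
      obtain ⟨p, hp, hpe⟩ := hφ e heE
      refine hnot (realizedAt_ancestors hmeet hp hpe fun u hu => ?_)
      obtain ⟨y, hye, rfl⟩ := Multiset.mem_map.1 (hpe ▸ Multiset.mem_add.2 (Or.inl hu))
      exact Finset.mem_map_of_mem φ (heS hye)
    refine le_add_left (Finset.card_pos.2 ⟨φ x, mem_dangerous.2 ⟨hhit, φ, x, hxS, rfl, ?_⟩⟩)
    rw [missing_eq_empty, Finset.card_empty]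
  · push Not at hhit
    obtain ⟨u, hu⟩ := hhit
    exact le_add_right (Finset.card_pos.2 ⟨u, mem_hitSet.2 hu⟩)

variable [Fintype V]

lemma dangerous_subset (hdeg : ∀ v ∈ S, d ≤ (incidentEdges E S v).card) {k : ℕ} (hk : k < d)
    (h : List (Step n 1 s)) :
    dangerous E S d k h ⊆ (hitIn (dangerous E S d (k + 1)) h).biUnion
      (ball (outNbrs h) (Fintype.card V)) := by
  intro w hw
  obtain ⟨hhit, φ, x, hxS, rfl, hmiss⟩ := mem_dangerous.1 hw
  obtain ⟨p, h', hsuff, z, hz, hzp, hzmiss⟩ :=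
    exists_drawn_of_card_missing_le hxS hmiss (hk.trans_le (hdeg x hxS))
  obtain ⟨hzS, hzx⟩ := mem_ancestors.1 hz
  refine Finset.mem_biUnion.2 ⟨φ z, mem_hitIn_of_suffix hsuff hzp ?_,
    map_mem_ball_of_reflTransGen hzx⟩
  refine mem_dangerous.2 ⟨fun u => ?_, φ, z, hzS, rfl, hzmiss⟩
  exact (hitCount_le_of_suffix ((List.suffix_cons p h').trans hsuff) u).trans_lt (hhit u)

lemma card_dangerous_le (hdeg : ∀ v ∈ S, d ≤ (incidentEdges E S v).card) {k : ℕ} (hk : k < d)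
    (h : List (Step n 1 s)) :
    (dangerous E S d k h).card ≤
      (1 + d * s) ^ Fintype.card V * (hitIn (dangerous E S d (k + 1)) h).card := by
  rcases (dangerous E S d k h).eq_empty_or_nonempty with hempty | ⟨w, hw⟩
  · rw [hempty, Finset.card_empty]
    exact Nat.zero_le _
  have card_outNbrs (u : Fin n) : (outNbrs h u).card ≤ d * s :=
    (card_outNbrs_le h u).trans (Nat.mul_le_mul ((mem_dangerous.1 hw).1 u).le (s.sub_le 1))
  rw [mul_comm]
  exact (Finset.card_le_card (dangerous_subset hdeg hk h)).trans
    (Finset.card_biUnion_le_card_mul _ _ _ fun u _ => card_ball_le card_outNbrs _ u)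

lemma probContains_le (hdeg : ∀ v ∈ S, d ≤ (incidentEdges E S v).card) (hS : S.Nonempty)
    (σ : Strategy n 1 s) (t : ℕ) :
    probContains n 1 s E σ t ≤
      2 * (n * (((1 + d * s) ^ Fintype.card V : ℕ) * t * (n : ℝ≥0∞)⁻¹) ^ d) := by
  rw [probContains]
  split_ifs with hn
  swap
  · exact zero_le
  set M := (1 + d * s) ^ Fintype.card V
  have one_le_M : 1 ≤ M := Nat.one_le_pow _ _ (by omega)
  have expect_hitSet := expect_card_le_pow (col_nonempty hn) σ (A := hitSet) (M := M) (d := d)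
    (fun j _ h => (Finset.card_le_card (hitSet_succ_subset j h)).trans
      (Nat.le_mul_of_pos_left _ one_le_M)) t
  have expect_dangerous := expect_card_le_pow (col_nonempty hn) σ (M := M) (d := d)
    (A := fun j => dangerous E S d (d - j)) (fun j hj h => by
      have := card_dangerous_le hdeg (show d - (j + 1) < d by omega) h
      rwa [show d - (j + 1) + 1 = d - j by omega] at this) t
  rw [Nat.sub_self] at expect_dangerous
  rw [toOuterMeasure_eq_expect, two_mul]
  refine le_trans ?_ (add_le_add expect_hitSet expect_dangerous)
  rw [← expect_add]
  refine expect_mono _ fun h => Set.indicator_apply_le' (fun hh => ?_) fun _ => zero_le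
  rw [Pi.one_apply]
  exact_mod_cast ContainsCopy.one_le_card_add_card hh hS

end Dangerous

/-! ### Exponents -/

section Exponent

lemma elog_natCast (t : ℕ) : elog t = (Real.log t : ℝ) := rfl

lemma elog_mono : Monotone elog := by
  intro a b hab
  induction b using ENat.recTopCoe with
  | top => exact le_top
  | coe b =>
    lift a to ℕ using ne_top_of_le_ne_top (ENat.natCast_ne_top b) hab
    rw [elog_natCast, elog_natCast, EReal.coe_le_coe_iff]
    rcases a.eq_zero_or_pos with rfl | ha
    · rw [Nat.cast_zero, Real.log_zero]
      exact Real.log_natCast_nonneg b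
    · exact Real.log_le_log (Nat.cast_pos.2 ha) (Nat.cast_le.2 (ENat.natCast_le_natCast.1 hab))

lemma inv_log_natCast_nonneg (n : ℕ) : (0 : EReal) ≤ ((Real.log n)⁻¹ : ℝ) :=
  EReal.coe_nonneg.2 (inv_nonneg.2 (Real.log_natCast_nonneg n))

lemma limsup_elog_le {f : ℕ → ℕ∞} {a : ℝ} (ha : 0 ≤ a)
    (hf : ∀ z > a, ∀ᶠ n : ℕ in atTop, f n ≤ ⌊(n : ℝ) ^ z⌋₊) :
    limsup (fun n : ℕ => elog (f n) * ((Real.log n)⁻¹ : ℝ)) atTop ≤ a := by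
  refine EReal.le_of_forall_lt_iff_le.1 fun z haz => ?_
  rw [EReal.coe_lt_coe_iff] at haz
  refine limsup_le_of_le ?_ ?_
  · isBoundedDefault
  filter_upwards [hf z haz, eventually_gt_atTop 1] with n hfn hn
  have hn' : (1 : ℝ) < n := Nat.one_lt_cast.2 hn
  have one_le_pow : 1 ≤ (n : ℝ) ^ z := Real.one_le_rpow hn'.le (ha.trans haz.le)
  calc elog (f n) * ((Real.log n)⁻¹ : ℝ)
      ≤ elog ⌊(n : ℝ) ^ z⌋₊ * ((Real.log n)⁻¹ : ℝ) :=
        mul_le_mul_of_nonneg_right (elog_mono hfn) (inv_log_natCast_nonneg n)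
    _ ≤ z := by
        rw [elog_natCast, ← EReal.coe_mul, EReal.coe_le_coe_iff, ← div_eq_mul_inv,
          div_le_iff₀ (Real.log_pos hn'), ← Real.log_rpow (by positivity)]
        exact Real.log_le_log (Nat.cast_pos.2 (Nat.floor_pos.2 one_le_pow))
          (Nat.floor_le (by positivity))

lemma tendsto_log_mul_rpow_div_log {c : ℝ} (hc : 0 < c) (a : ℝ) :
    Tendsto (fun n : ℕ => Real.log (c * (n : ℝ) ^ a) * (Real.log n)⁻¹) atTop (𝓝 a) := by
  have inv_log_tendsto : Tendsto (fun n : ℕ => (Real.log n)⁻¹) atTop (𝓝 0) :=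
    tendsto_inv_atTop_zero.comp (Real.tendsto_log_atTop.comp tendsto_natCast_atTop_atTop)
  have limit : Tendsto (fun n : ℕ => Real.log c * (Real.log n)⁻¹ + a) atTop (𝓝 a) := by
    simpa using (inv_log_tendsto.const_mul (Real.log c)).add_const a
  refine limit.congr' ?_
  filter_upwards [eventually_gt_atTop 1] with n hn
  have hn' : (1 : ℝ) < n := Nat.one_lt_cast.2 hn
  have log_ne_zero : Real.log n ≠ 0 := (Real.log_pos hn').ne'
  rw [Real.log_mul hc.ne' (by positivity), Real.log_rpow (by positivity)]
  field_simp

lemma le_limsup_elog {f : ℕ → ℕ∞} {a c : ℝ} (hc : 0 < c)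
    (hf : ∀ᶠ n : ℕ in atTop, (⌈c * (n : ℝ) ^ a⌉₊ : ℕ∞) ≤ f n) :
    (a : EReal) ≤ limsup (fun n : ℕ => elog (f n) * ((Real.log n)⁻¹ : ℝ)) atTop := by
  have limit : Tendsto (fun n : ℕ =>
      ((Real.log (c * (n : ℝ) ^ a) * (Real.log n)⁻¹ : ℝ) : EReal)) atTop (𝓝 a) :=
    EReal.tendsto_coe.2 (tendsto_log_mul_rpow_div_log hc a)
  rw [← limit.limsup_eq]
  refine limsup_le_limsup ?_
  filter_upwards [hf, eventually_gt_atTop 0] with n hfn hn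
  rw [EReal.coe_mul]
  refine mul_le_mul_of_nonneg_right (le_trans ?_ (elog_mono hfn)) (inv_log_natCast_nonneg n)
  rw [elog_natCast, EReal.coe_le_coe_iff]
  exact Real.log_le_log (mul_pos hc (Real.rpow_pos_of_pos (Nat.cast_pos.2 hn) a)) (Nat.le_ceil _)

lemma limsup_half_le_tauExp {V : Type*} (r s : ℕ) (E : Finset (Finset V)) :
    limsup (fun n : ℕ => elog (tauQ r s E (1 / 2) n) * ((Real.log n)⁻¹ : ℝ)) atTop ≤
      tauExp r s E :=
  le_iSup₂_of_le (1 / 2) ⟨by simp, by simp [ENNReal.inv_lt_one]⟩ le_rfl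

lemma tauExp_nonneg {V : Type*} (r s : ℕ) (E : Finset (Finset V)) : 0 ≤ tauExp r s E := by
  refine le_trans ?_ (limsup_half_le_tauExp r s E)
  rw [← limsup_const (f := (atTop : Filter ℕ)) (0 : EReal)]
  refine limsup_le_limsup (Eventually.of_forall fun n => ?_)
  refine mul_nonneg ?_ (inv_log_natCast_nonneg n)
  have elog_zero : elog 0 = 0 := by
    rw [← Nat.cast_zero, elog_natCast, Nat.cast_zero, Real.log_zero, EReal.coe_zero]
  exact elog_zero.symm.trans_le (elog_mono zero_le)

end Exponent

section UpperBound

/-- To be applied with `x = n ^ (1 / d)` and `y = n ^ ε`. -/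
lemma isSchedule_geometric {n m d T : ℕ} {L x y : ℝ} (hL : 0 ≤ L) (hx : 2 ≤ x) (hxn : x ^ d ≤ n)
    (hy : 4 * (1 + 2 * L) ≤ y) (hm : 2 * m ≤ n) (hT : n / x * y ≤ T) :
    IsSchedule n m d T L fun j => n / (2 * x ^ j) := by
  have n_pos : (0 : ℝ) < n := lt_of_lt_of_le (by positivity) hxn
  refine ⟨?_, fun j _ => by positivity, fun j hj => ?_⟩
  · rw [pow_zero, mul_one]
    have : (2 * m : ℝ) ≤ n := mod_cast hm
    linarith
  set b' := n / (2 * x ^ (j + 1)) with hb'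
  have half_le : 1 / 2 ≤ b' := by
    rw [hb', le_div_iff₀ (by positivity)]
    have : x ^ (j + 1) ≤ x ^ d := pow_le_pow_right₀ (by linarith) hj
    linarith
  have gap : b' / 2 * x ≤ n / (2 * x ^ j) - b' := by
    have : n / (2 * x ^ j) = b' * x := by
      rw [hb', pow_succ]
      field_simp
    rw [this]
    nlinarith
  calc b' + L ≤ b' * (4 * (1 + 2 * L)) / 4 := by nlinarith
    _ ≤ b' * y / 4 := by gcongr
    _ = b' / 2 * x / (2 * n) * (n / x * y) := by
        field_simp
        ring
    _ ≤ (n / (2 * x ^ j) - b') / (2 * n) * T := by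
        have y_nonneg : 0 ≤ y := by linarith
        have gap_nonneg : 0 ≤ n / (2 * x ^ j) - b' := le_trans (by positivity) gap
        gcongr

lemma eventually_exists_isSchedule_of_pos {d : ℕ} (hd : 0 < d) {z : ℝ} (hz : (d - 1 : ℝ) / d < z)
    {L : ℝ} (hL : 0 ≤ L) (m K : ℕ) :
    ∀ᶠ n : ℕ in atTop, ∃ T b, IsSchedule n m d T L b ∧ K * T ≤ ⌊(n : ℝ) ^ z⌋₊ := by
  have hd' : (0 : ℝ) < d := Nat.cast_pos.2 hd
  obtain ⟨ε, hε, rfl⟩ : ∃ ε > 0, z = (d - 1 : ℝ) / d + ε + ε :=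
    ⟨(z - (d - 1 : ℝ) / d) / 2, by linarith, by ring⟩
  have tendsto_rpow {w : ℝ} (hw : 0 < w) : Tendsto (fun n : ℕ => (n : ℝ) ^ w) atTop atTop :=
    (tendsto_rpow_atTop hw).comp tendsto_natCast_atTop_atTop
  filter_upwards [(tendsto_rpow (inv_pos.2 hd')).eventually_ge_atTop 2,
    (tendsto_rpow hε).eventually_ge_atTop (4 * (1 + 2 * L)),
    (tendsto_rpow hε).eventually_ge_atTop (2 * K),
    eventually_ge_atTop (2 * m), eventually_ge_atTop 1] with n hx hy hK hm hn
  have hn' : (1 : ℝ) ≤ n := Nat.one_le_cast.2 hn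
  set a : ℝ := (d - 1 : ℝ) / d with ha
  have ha0 : 0 ≤ a := div_nonneg (sub_nonneg.2 (Nat.one_le_cast.2 hd)) hd'.le
  have div_mul_eq : (n : ℝ) / (n : ℝ) ^ (d : ℝ)⁻¹ * (n : ℝ) ^ ε = (n : ℝ) ^ (a + ε) := by
    rw [Real.rpow_add (by positivity), show a = 1 - (d : ℝ)⁻¹ by rw [ha]; field_simp,
      Real.rpow_sub (by positivity), Real.rpow_one]
  have one_le_pow : 1 ≤ (n : ℝ) ^ (a + ε) := Real.one_le_rpow hn' (by positivity)
  refine ⟨⌈(n : ℝ) ^ (a + ε)⌉₊, _,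
    isSchedule_geometric hL hx ?_ hy hm (div_mul_eq.trans_le (Nat.le_ceil _)), Nat.le_floor ?_⟩
  · exact (Real.rpow_inv_natCast_pow (by positivity) hd.ne').le
  calc ((K * ⌈(n : ℝ) ^ (a + ε)⌉₊ : ℕ) : ℝ) = K * ⌈(n : ℝ) ^ (a + ε)⌉₊ := Nat.cast_mul _ _
    _ ≤ K * (2 * (n : ℝ) ^ (a + ε)) := by
        gcongr
        linarith [Nat.ceil_lt_add_one (zero_le_one.trans one_le_pow)]
    _ = (n : ℝ) ^ (a + ε) * (2 * K) := by ring
    _ ≤ (n : ℝ) ^ (a + ε) * (n : ℝ) ^ ε := by gcongr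
    _ = (n : ℝ) ^ (a + ε + ε) := (Real.rpow_add (by positivity) _ _).symm

lemma eventually_exists_isSchedule {d : ℕ} {z : ℝ} (hz : (d - 1 : ℝ) / d < z) {L : ℝ}
    (hL : 0 ≤ L) (m K : ℕ) :
    ∀ᶠ n : ℕ in atTop, ∃ T b, IsSchedule n m d T L b ∧ K * T ≤ ⌊(n : ℝ) ^ z⌋₊ := by
  rcases d.eq_zero_or_pos with rfl | hd
  · filter_upwards [eventually_gt_atTop m] with n hn
    refine ⟨0, fun _ => n - m, ⟨le_rfl, fun _ _ => ?_, fun j hj => absurd hj j.not_lt_zero⟩, ?_⟩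
    · exact sub_pos.2 (Nat.cast_lt.2 hn)
    · exact Nat.zero_le _
  · exact eventually_exists_isSchedule_of_pos hd hz hL m K

lemma exists_add_mul_exp_neg_le_one {q : ℝ≥0∞} (hq : q < 1) (K : ℕ) :
    ∃ L : ℝ, 0 ≤ L ∧ q + K * ENNReal.ofReal (Real.exp (-L)) ≤ 1 := by
  have limit : Tendsto (fun L : ℝ => q + K * ENNReal.ofReal (Real.exp (-L))) atTop (𝓝 q) := by
    have := ENNReal.Tendsto.const_mul
      (ENNReal.tendsto_ofReal Real.tendsto_exp_neg_atTop_nhds_zero)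
      (Or.inr (ENNReal.natCast_ne_top K))
    simpa using this.const_add q
  exact ((eventually_ge_atTop 0).and (limit.eventually_le_const hq)).exists

lemma sub_one_div_natCast_nonneg (d : ℕ) : (0 : ℝ) ≤ (d - 1 : ℝ) / d := by
  rcases d.eq_zero_or_pos with rfl | hd
  · simp
  · exact div_nonneg (sub_nonneg.2 (Nat.one_le_cast.2 hd)) d.cast_nonneg

lemma tauExp_le {V : Type*} [Finite V] [DecidableEq V] {s : ℕ} (hs : 1 ≤ s)
    {E : Finset (Finset V)} (hunif : ∀ e ∈ E, e.card = s) {d : ℕ} (hE : Degen E d) :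
    tauExp 1 s E ≤ ((d - 1 : ℝ) / d : ℝ) := by
  have := Fintype.ofFinite V
  refine iSup₂_le fun q hq => limsup_elog_le (sub_one_div_natCast_nonneg d) fun z hz => ?_
  obtain ⟨L, hL, hqL⟩ := exists_add_mul_exp_neg_le_one hq.2 E.card
  filter_upwards [eventually_exists_isSchedule hz hL (Fintype.card V) E.card,
    eventually_ge_atTop s] with n ⟨T, b, hb, hT⟩ hsn
  exact (hb.tauQ_le hs hsn hunif hE hqL).trans (ENat.natCast_le_natCast.2 hT)

end UpperBound

section LowerBound

variable {V : Type*} [DecidableEq V] {E : Finset (Finset V)} {d : ℕ}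

lemma DegeneracyEq.exists_le_card_incidentEdges (hE : DegeneracyEq E d) (hd : 0 < d) :
    ∃ S : Finset V, S.Nonempty ∧ ∀ v ∈ S, d ≤ (incidentEdges E S v).card := by
  have not_degen : ¬ Degen E (d - 1) := fun hcon => by
    have := hE.2 _ hcon
    omega
  simp only [Degen, not_forall, not_exists, not_and, not_le] at not_degen
  obtain ⟨S, hS, hdeg⟩ := not_degen
  refine ⟨S, hS, fun v hv => ?_⟩
  have := hdeg v hv
  rw [incidentEdges]
  omega

lemma two_mul_mul_pow_lt_half {n t M : ℝ} (hn : 0 < n) (ht : 0 ≤ t) (hM : 0 < M) (hd : 0 < d)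
    (htn : t < (4 * M)⁻¹ * n ^ ((d - 1 : ℝ) / d)) :
    2 * (n * (M * t * n⁻¹) ^ d) < 1 / 2 := by
  have hd' : (d : ℝ) ≠ 0 := Nat.cast_ne_zero.2 hd.ne'
  have ratio_lt : M * t * n⁻¹ < n ^ (-(d : ℝ)⁻¹) / 4 := by
    calc M * t * n⁻¹ < M * ((4 * M)⁻¹ * n ^ ((d - 1 : ℝ) / d)) * n⁻¹ := by gcongr
      _ = n ^ ((d - 1 : ℝ) / d) * n ^ (-1 : ℝ) / 4 := by
          rw [Real.rpow_neg_one]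
          field_simp
      _ = n ^ (-(d : ℝ)⁻¹) / 4 := by
          rw [← Real.rpow_add hn]
          congr 2
          field_simp
          ring
  calc 2 * (n * (M * t * n⁻¹) ^ d) < 2 * (n * (n ^ (-(d : ℝ)⁻¹) / 4) ^ d) := by gcongr
    _ = 2 * (1 / 4) ^ d := by
        rw [div_pow, Real.rpow_neg hn.le, inv_pow, Real.rpow_inv_natCast_pow hn.le hd.ne',
          one_div_pow]
        field_simp
    _ ≤ 2 * (1 / 4) ^ 1 := by
        gcongr 2 * ?_
        exact pow_le_pow_of_le_one (by norm_num) (by norm_num) hd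
    _ = 1 / 2 := by norm_num

lemma ceil_le_tauQ_half [Fintype V] {S : Finset V} (hS : S.Nonempty) (hd : 0 < d)
    (hdeg : ∀ v ∈ S, d ≤ (incidentEdges E S v).card) (s : ℕ) {n : ℕ} (hn : 0 < n) :
    (⌈(4 * ((1 + d * s) ^ Fintype.card V : ℕ) : ℝ)⁻¹ * (n : ℝ) ^ ((d - 1 : ℝ) / d)⌉₊ : ℕ∞) ≤
      tauQ 1 s E (1 / 2) n := by
  refine le_tauQ fun σ t ht =>
    ENat.natCast_le_natCast.2 (Nat.ceil_le.2 (le_of_not_gt fun htn => ?_))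
  have prob_ge := ht.trans (probContains_le hdeg hS σ t)
  set M := (1 + d * s) ^ Fintype.card V
  have M_pos : 0 < M := by positivity
  refine (two_mul_mul_pow_lt_half (Nat.cast_pos.2 hn) t.cast_nonneg (Nat.cast_pos.2 M_pos) hd
    htn).not_ge ?_
  have inv_ne_top : (n : ℝ≥0∞)⁻¹ ≠ ⊤ := ENNReal.inv_ne_top.2 (Nat.cast_ne_zero.2 hn.ne')
  have := ENNReal.toReal_mono (by finiteness) prob_ge
  simpa using this

lemma le_tauExp [Finite V] (s : ℕ) (hE : DegeneracyEq E d) (hd : 0 < d) :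
    ((d - 1 : ℝ) / d : ℝ) ≤ tauExp 1 s E := by
  have := Fintype.ofFinite V
  obtain ⟨S, hS, hdeg⟩ := hE.exists_le_card_incidentEdges hd
  have c_pos : 0 < (4 * ((1 + d * s) ^ Fintype.card V : ℕ) : ℝ)⁻¹ := by positivity
  refine (le_limsup_elog c_pos ?_).trans (limsup_half_le_tauExp 1 s E)
  filter_upwards [eventually_gt_atTop 0] with n hn
  exact ceil_le_tauQ_half hS hd hdeg s hn

end LowerBound

end SemiRandomHypergraph

open SemiRandomHypergraph in
/-- **Corollary 5.** Let `r = 1`, `s ≥ 2` and let `G` be a fixed `s`-uniform hypergraph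
of degeneracy `d`. Then `τ^{(1)}_{P_G} = (d-1)/d`. -/
theorem semiRandom_hypergraph_r_eq_one_threshold
    {V : Type*} [Fintype V] [DecidableEq V] (s : ℕ) (hs : 2 ≤ s)
    (E : Finset (Finset V)) (hunif : ∀ e ∈ E, e.card = s)
    (d : ℕ) (hdeg : DegeneracyEq E d) :
    tauExp 1 s E = ((((d : ℝ) - 1) / d : ℝ) : EReal) := by
  refine le_antisymm (tauExp_le (one_le_two.trans hs) hunif hdeg.1) ?_
  rcases d.eq_zero_or_pos with rfl | hd
  · simpa using tauExp_nonneg 1 s E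
  · exact le_tauExp s hdeg hd
end
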